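/- A Peano space contains at most countably many maximal cyclic subsets. -/

import Mathlib

open Metric Set

/-- A Jordan curve: a subset homeomorphic to the circle. -/
def IsJordanCurve {X : Type} [TopologicalSpace X] (J : Set X) : Prop :=
  Nonempty (AddCircle (1 : ℝ) ≃ₜ J)

/-- A set is cyclicly connected if every pair of its points lies on a Jordan curve in it. -/
def CyclicallyConnected {X : Type} [TopologicalSpace X] (C : Set X) : Prop :=
  ∀ x ∈ C, ∀ y ∈ C, ∃ J : Set X, J ⊆ C ∧ IsJordanCurve J ∧ x ∈ J ∧ y ∈ J

/-- A maximal cyclic subset: non-degenerate, cyclicly connected, and not a proper subset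
of any cyclicly connected subset. -/
def MaximalCyclic {X : Type} [TopologicalSpace X] (T : Set X) : Prop :=
  ¬ T.Subsingleton ∧ CyclicallyConnected T ∧
    ∀ C : Set X, CyclicallyConnected C → T ⊆ C → C = T

open Filter Topology

section LocalPathConnectedness

variable {X : Type*} [MetricSpace X]

lemma exists_isPreconnected_subset_ball_of_dist_lt [CompactSpace X] [LocallyConnectedSpace X]
    {ε : ℝ} (hε : 0 < ε) :
    ∃ δ > 0, ∀ x y : X, dist x y < δ →
      ∃ C : Set X, IsPreconnected C ∧ x ∈ C ∧ y ∈ C ∧ C ⊆ ball x ε := by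
  have h : ∀ z : X, ∃ U : Set X, IsOpen U ∧ z ∈ U ∧ IsConnected U ∧ U ⊆ ball z (ε / 2) := by
    intro z
    obtain ⟨U, hU, h1, h2, h3⟩ := locallyConnectedSpace_iff_subsets_isOpen_isConnected.1
      ‹_› z (ball z (ε / 2)) (ball_mem_nhds z (by positivity))
    exact ⟨U, h1, h2, h3, hU⟩
  choose U hUo hzU hUc hUb using h
  obtain ⟨δ, hδ, H⟩ := lebesgue_number_lemma_of_metric (s := (univ : Set X)) isCompact_univ hUo
    (fun z _ => mem_iUnion.2 ⟨z, hzU z⟩)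
  refine ⟨δ, hδ, fun x y hxy => ?_⟩
  obtain ⟨z, hz⟩ := H x trivial
  have hx : x ∈ U z := hz (mem_ball_self hδ)
  refine ⟨U z, (hUc z).isPreconnected, hx, hz (by rwa [mem_ball, dist_comm]), fun w hw => ?_⟩
  have h1 := hUb z hw
  have h2 := hUb z hx
  rw [mem_ball] at *
  linarith [dist_triangle_right w x z]

/-- A preconnected set contains finite chains with small steps between any two of its points. -/
lemma IsPreconnected.exists_chain {C : Set X} (hC : IsPreconnected C) {δ : ℝ} (hδ : 0 < δ)
    {x y : X} (hx : x ∈ C) (hy : y ∈ C) :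
    ∃ (n : ℕ) (c : ℕ → X), c 0 = x ∧ (∀ k, n ≤ k → c k = y) ∧ (∀ k, c k ∈ C) ∧
      ∀ k, dist (c k) (c (k + 1)) < δ := by
  refine hC.induction₂' (fun x y => x ∈ C → y ∈ C → ∃ (n : ℕ) (c : ℕ → X), c 0 = x ∧
    (∀ k, n ≤ k → c k = y) ∧ (∀ k, c k ∈ C) ∧ ∀ k, dist (c k) (c (k + 1)) < δ) ?_ ?_ hx hy hx hy
  · intro x _
    have key : ∀ x y : X, dist x y < δ → x ∈ C → y ∈ C → ∃ (n : ℕ) (c : ℕ → X), c 0 = x ∧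
        (∀ k, n ≤ k → c k = y) ∧ (∀ k, c k ∈ C) ∧ ∀ k, dist (c k) (c (k + 1)) < δ := by
      intro x y hxy hx hy
      refine ⟨1, fun k => if k = 0 then x else y, by simp, ?_, ?_, ?_⟩
      · intro k hk
        simp [show k ≠ 0 by omega]
      · intro k
        dsimp only
        split_ifs <;> assumption
      · intro k
        rcases Nat.eq_zero_or_pos k with rfl | hk
        · simpa using hxy
        · simpa [hk.ne'] using hδ
    filter_upwards [nhdsWithin_le_nhds (ball_mem_nhds x hδ)] with y hy
    exact ⟨key x y (by rwa [dist_comm]), key y x hy⟩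
  · intro x y z _ hyC _ hxy hyz hxC hzC
    obtain ⟨n, c, c0, cn, cC, cd⟩ := hxy hxC hyC
    obtain ⟨m, d, d0, dm, dC, dd⟩ := hyz hyC hzC
    refine ⟨n + m, fun k => if k < n then c k else d (k - n), ?_, ?_, ?_, ?_⟩
    · dsimp only
      split_ifs with h
      · exact c0
      · rw [Nat.zero_sub, d0, ← cn 0 (by omega), c0]
    · intro k hk
      simp only [show ¬ k < n by omega, if_false]
      exact dm _ (by omega)
    · intro k
      dsimp only
      split_ifs
      exacts [cC _, dC _]
    · intro k
      dsimp only
      by_cases h1 : k + 1 < n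
      · simpa [h1, show k < n by omega] using cd k
      · by_cases h2 : k < n
        · rw [if_pos h2, if_neg h1, show k + 1 - n = 0 by omega, d0, ← cn (k + 1) (by omega)]
          exact cd k
        · rw [if_neg h2, if_neg h1, show k + 1 - n = k - n + 1 by omega]
          exact dd _

/-- An eventually constant sequence of points with steps of size less than `δ`. -/
structure StepChain (x y : X) (δ : ℝ) where
  len : ℕ
  len_pos : 0 < len
  pt : ℕ → X
  pt_zero : pt 0 = x
  pt_of_le : ∀ k, len ≤ k → pt k = y
  dist_lt : ∀ k, dist (pt k) (pt (k + 1)) < δ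

lemma StepChain.exists_refinement {x y : X} {δ ε δ' : ℝ} (hδ' : 0 < δ')
    (H : ∀ x y : X, dist x y < δ → ∃ C : Set X, IsPreconnected C ∧ x ∈ C ∧ y ∈ C ∧ C ⊆ ball x ε)
    (c : StepChain x y δ) :
    ∃ (d : StepChain x y δ') (N : ℕ), 0 < N ∧ d.len = c.len * N ∧
      ∀ j, dist (c.pt (j / N)) (d.pt j) ≤ ε := by
  have h : ∀ i, ∃ (n : ℕ) (e : ℕ → X), e 0 = c.pt i ∧ (∀ k, n ≤ k → e k = c.pt (i + 1)) ∧
      (∀ k, e k ∈ ball (c.pt i) ε) ∧ (∀ k, dist (e k) (e (k + 1)) < δ') ∧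
      (c.len ≤ i → n = 0) := by
    intro i
    obtain ⟨C, hC, h1, h2, h3⟩ := H _ _ (c.dist_lt i)
    by_cases hi : c.len ≤ i
    · refine ⟨0, fun _ => c.pt i, rfl, fun k _ => ?_, fun k => h3 h1, fun k => by simpa, fun _ => rfl⟩
      rw [c.pt_of_le _ hi, c.pt_of_le _ (by omega)]
    · obtain ⟨n, e, e0, en, eC, ed⟩ := hC.exists_chain hδ' h1 h2
      exact ⟨n, e, e0, en, fun k => h3 (eC k), ed, fun h => absurd h hi⟩
  choose n e e0 en eb ed hn using h
  set N := (Finset.range c.len).sup n + 1 with hN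
  have hnN : ∀ i, n i ≤ N := by
    intro i
    by_cases hi : c.len ≤ i
    · simp [hn i hi]
    · have := Finset.le_sup (f := n) (Finset.mem_range.2 (not_le.1 hi))
      omega
  have hN0 : 0 < N := by omega
  refine ⟨⟨c.len * N, Nat.mul_pos c.len_pos hN0, fun j => e (j / N) (j % N), ?_, ?_, ?_⟩,
    N, hN0, rfl, fun j => ?_⟩
  · simp [e0, c.pt_zero]
  · intro k hk
    have hi : c.len ≤ k / N := (Nat.le_div_iff_mul_le hN0).2 hk
    rw [en _ _ (by simp [hn _ hi]), c.pt_of_le _ (by omega)]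
  · intro k
    by_cases hk : k % N + 1 < N
    · have h1 : (k + 1) / N = k / N := by
        rw [Nat.succ_div, if_neg, add_zero]
        intro hd
        have := Nat.mod_eq_zero_of_dvd hd
        rw [Nat.add_mod, Nat.mod_eq_of_lt (a := 1) (by omega), Nat.mod_eq_of_lt hk] at this
        omega
      have h2 : (k + 1) % N = k % N + 1 := by
        rw [Nat.add_mod, Nat.mod_eq_of_lt (a := 1) (by omega), Nat.mod_eq_of_lt hk]
      rw [h1, h2]
      exact ed _ _
    · have hk' : k % N + 1 = N := by
        have := Nat.mod_lt k hN0
        omega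
      have h3 : k + 1 = N * (k / N + 1) := by
        have := Nat.div_add_mod k N
        rw [mul_add]
        omega
      have h1 : (k + 1) / N = k / N + 1 := by
        rw [h3, Nat.mul_div_cancel_left _ hN0]
      have h2 : (k + 1) % N = 0 := by
        rw [h3, Nat.mul_mod_right]
      rw [h1, h2, e0, ← en (k / N) (k % N + 1) (by rw [hk']; exact hnN _)]
      exact ed _ _
  · have := eb (j / N) (j % N)
    rw [mem_ball'] at this
    exact this.le

lemma exists_joinedIn_ball_of_dist_lt [CompactSpace X] [LocallyConnectedSpace X]
    {ε : ℝ} (hε : 0 < ε) :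
    ∃ δ > 0, ∀ x y : X, dist x y < δ → JoinedIn (ball x ε) x y := by
  have h : ∀ n : ℕ, ∃ δ > 0, δ ≤ ε / 4 / 2 / 2 ^ n ∧ ∀ x y : X, dist x y < δ →
      ∃ C : Set X, IsPreconnected C ∧ x ∈ C ∧ y ∈ C ∧ C ⊆ ball x (ε / 4 / 2 / 2 ^ n) := by
    intro n
    have hp : 0 < ε / 4 / 2 / 2 ^ n := by positivity
    obtain ⟨δ, hδ, H⟩ := exists_isPreconnected_subset_ball_of_dist_lt (X := X) hp
    exact ⟨min δ (ε / 4 / 2 / 2 ^ n), lt_min hδ hp, min_le_right _ _,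
      fun x y hxy => H x y (hxy.trans_le (min_le_left _ _))⟩
  choose δ hδ hδε H using h
  refine ⟨δ 0, hδ 0, fun x y hxy => ?_⟩
  let c₀ : StepChain x y (δ 0) :=
    { len := 1
      len_pos := one_pos
      pt := fun k => if k = 0 then x else y
      pt_zero := by simp
      pt_of_le := fun k hk => by simp [show k ≠ 0 by omega]
      dist_lt := fun k => by
        rcases Nat.eq_zero_or_pos k with rfl | hk
        · simpa using hxy
        · simpa [hk.ne'] using hδ 0 }
  choose r N hN0 hlen hdist using fun (n : ℕ) (c : StepChain x y (δ n)) =>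
    c.exists_refinement (hδ (n + 1)) (H n)
  let c : ∀ n, StepChain x y (δ n) := fun n => Nat.rec c₀ (fun n c => r n c) n
  have hc : ∀ n, c (n + 1) = r n (c n) := fun n => rfl
  let F : ℕ → ℝ → X := fun n t => (c n).pt ⌊t * (c n).len⌋₊
  have hF : ∀ t n, dist (F n t) (F (n + 1) t) ≤ ε / 4 / 2 / 2 ^ n := by
    intro t n
    have h1 := hdist n (c n) ⌊t * (c (n + 1)).len⌋₊
    have h2 : ⌊t * (c (n + 1)).len⌋₊ / N n (c n) = ⌊t * (c n).len⌋₊ := by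
      rw [← Nat.floor_div_natCast, hc, hlen]
      have : (N n (c n) : ℝ) ≠ 0 := by exact_mod_cast (hN0 n (c n)).ne'
      push_cast
      congr 1
      field_simp
    rw [h2] at h1
    exact h1
  choose f hf using fun t => cauchySeq_tendsto_of_complete (cauchySeq_of_le_geometric_two (hF t))
  have hfF : ∀ n t, dist (F n t) (f t) ≤ ε / 4 / 2 ^ n := fun n t =>
    dist_le_of_le_geometric_two_of_tendsto (hF t) (hf t) n
  have hstep : ∀ (n : ℕ) (t t' : ℝ), 0 ≤ t → t ≤ t' → t' < t + 1 / (c n).len →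
      dist (F n t) (F n t') ≤ ε / 4 / 2 ^ n := by
    intro n t t' h0 h1 h2
    have hl : (0 : ℝ) < (c n).len := by exact_mod_cast (c n).len_pos
    have h3 : ⌊t * (c n).len⌋₊ ≤ ⌊t' * (c n).len⌋₊ := Nat.floor_mono (by gcongr)
    have h4 : ⌊t' * (c n).len⌋₊ ≤ ⌊t * (c n).len⌋₊ + 1 := by
      rw [← Nat.floor_add_one (by positivity)]
      refine Nat.floor_mono ?_
      have := mul_le_mul_of_nonneg_right h2.le hl.le
      rw [add_mul, one_div_mul_cancel hl.ne'] at this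
      exact this
    have hp : 0 ≤ ε / 4 / 2 ^ n := by positivity
    rcases h3.eq_or_lt with h5 | h5
    · simp only [F, ← h5, dist_self]
      exact hp
    · have h6 : ⌊t' * (c n).len⌋₊ = ⌊t * (c n).len⌋₊ + 1 := by omega
      simp only [F, h6]
      refine ((c n).dist_lt _).le.trans ((hδε n).trans ?_)
      rw [div_right_comm (ε / 4)]
      exact half_le_self hp
  have hcont : ContinuousOn f (Icc 0 1) := by
    rw [Metric.continuousOn_iff]
    intro t ht η hη
    obtain ⟨n, hn⟩ : ∃ n : ℕ, 3 * (ε / 4 / 2 ^ n) < η := by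
      have h1 : Tendsto (fun n : ℕ => 3 * (ε / 4 * (1 / 2) ^ n)) atTop (𝓝 (3 * (ε / 4 * 0))) :=
        ((tendsto_pow_atTop_nhds_zero_of_lt_one (by norm_num) (by norm_num)).const_mul _).const_mul _
      rw [mul_zero, mul_zero] at h1
      obtain ⟨n, hn⟩ := (h1.eventually (gt_mem_nhds hη)).exists
      refine ⟨n, ?_⟩
      rwa [one_div, inv_pow, ← div_eq_mul_inv] at hn
    have hl : (0 : ℝ) < (c n).len := by exact_mod_cast (c n).len_pos
    refine ⟨1 / (c n).len, by positivity, fun t' ht' htt' => ?_⟩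
    rw [Real.dist_eq, abs_lt] at htt'
    have h1 : dist (F n t') (F n t) ≤ ε / 4 / 2 ^ n := by
      rcases le_total t t' with h | h
      · rw [dist_comm]
        exact hstep n t t' ht.1 h (by linarith)
      · exact hstep n t' t ht'.1 h (by linarith)
    have h2 := hfF n t
    have h3 := hfF n t'
    have h4 := dist_triangle4 (f t') (F n t') (F n t) (f t)
    rw [dist_comm (f t') (F n t')] at h4
    linarith
  have hend : ∀ n, (c n).pt 0 = x ∧ (c n).pt (c n).len = y :=
    fun n => ⟨(c n).pt_zero, (c n).pt_of_le _ le_rfl⟩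
  refine JoinedIn.ofLine hcont ?_ ?_ ?_
  · refine tendsto_nhds_unique (hf 0) ?_
    simp [F, (hend _).1]
  · refine tendsto_nhds_unique (hf 1) ?_
    simp [F, (hend _).2]
  · rintro _ ⟨t, ht, rfl⟩
    have h1 := hfF 0 t
    have h2 : dist x (F 0 t) ≤ ε / 4 := by
      have hd : dist x y ≤ ε / 4 := by
        have := hδε 0
        rw [pow_zero, div_one] at this
        linarith
      change dist x (if ⌊t * (c 0).len⌋₊ = 0 then x else y) ≤ ε / 4
      split_ifs
      · rw [dist_self]; positivity
      · exact hd
    rw [mem_ball']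
    have := dist_triangle x (F 0 t) (f t)
    rw [pow_zero, div_one] at h1
    linarith

theorem LocallyPathConnectedSpace.of_compact_locallyConnected [CompactSpace X]
    [LocallyConnectedSpace X] : LocallyPathConnectedSpace X := by
  rw [locallyPathConnectedSpace_iff_pathComponentIn_mem_nhds]
  intro x u hu hxu
  obtain ⟨ε, hε, hεu⟩ := Metric.isOpen_iff.1 hu x hxu
  obtain ⟨δ, hδ, H⟩ := exists_joinedIn_ball_of_dist_lt (X := X) hε
  refine mem_of_superset (ball_mem_nhds x hδ) fun y hy => ?_
  exact (H x y (by rwa [dist_comm])).mono hεu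

end LocalPathConnectedness

section PathToArc

variable {X : Type*} [MetricSpace X]

/-- `A` is an arc from `x` to `y`; a single point counts as a degenerate arc. -/
def IsArc (A : Set X) (x y : X) : Prop :=
  ∃ (γ : ℝ → X) (s t : ℝ), s ≤ t ∧ ContinuousOn γ (Icc s t) ∧ InjOn γ (Icc s t) ∧
    γ s = x ∧ γ t = y ∧ γ '' Icc s t = A

/-- Parameters in `K` describe `γ` after the excursions over the gaps of `K`, which are loops,
have been removed. -/
structure IsLoopErasure (γ : ℝ → X) (K : Set ℝ) : Prop where
  isClosed : IsClosed K
  subset : K ⊆ Icc 0 1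
  zero_mem : (0 : ℝ) ∈ K
  one_mem : (1 : ℝ) ∈ K
  eq_of_gap : ∀ s ∈ K, ∀ t ∈ K, s < t → Disjoint (Ioo s t) K → γ s = γ t

lemma IsLoopErasure.sInter {γ : ℝ → X} (hγ : Continuous γ) {c : Set (Set ℝ)}
    (hc : ∀ K ∈ c, IsLoopErasure γ K) (hchain : IsChain (· ⊆ ·) c) (hne : c.Nonempty) :
    IsLoopErasure γ (⋂₀ c) where
  isClosed := isClosed_sInter fun K hK => (hc K hK).isClosed
  subset := by
    obtain ⟨K, hK⟩ := hne
    exact (sInter_subset_of_mem hK).trans (hc K hK).subset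
  zero_mem := fun K hK => (hc K hK).zero_mem
  one_mem := fun K hK => (hc K hK).one_mem
  eq_of_gap := by
    intro s hs t ht hst hdisj
    by_contra hne'
    obtain ⟨U, V, hU, hV, hsU, htV, hUV⟩ := t2_separation hne'
    obtain ⟨ε, hε, hεU⟩ := Metric.isOpen_iff.1 (hU.preimage hγ) s hsU
    obtain ⟨η, hη, hηV⟩ := Metric.isOpen_iff.1 (hV.preimage hγ) t htV
    set m := min (min (ε / 2) (η / 2)) ((t - s) / 2) with hm
    have hm0 : 0 < m := by
      simp only [hm, lt_min_iff]
      refine ⟨⟨by positivity, by positivity⟩, by linarith⟩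
    have hmε : m < ε := ((min_le_left _ _).trans (min_le_left _ _)).trans_lt (by linarith)
    have hmη : m < η := ((min_le_left _ _).trans (min_le_right _ _)).trans_lt (by linarith)
    have hmt : m ≤ (t - s) / 2 := min_le_right _ _
    obtain ⟨K, hK, hKd⟩ : ∃ K ∈ c, Disjoint (Icc (s + m) (t - m)) K := by
      by_contra hcon
      push Not at hcon
      have : (Icc (s + m) (t - m) ∩ ⋂ K : c, (K : Set ℝ)).Nonempty := by
        have : Nonempty c := hne.to_subtype
        refine isCompact_Icc.inter_iInter_nonempty _ (fun K => (hc K K.2).isClosed) ?_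
        intro u
        obtain ⟨K, hK⟩ : ∃ K : c, ∀ L ∈ u, (K : Set ℝ) ⊆ L := by
          have hd : Directed (· ⊇ ·) (fun K : c => (K : Set ℝ)) := by
            intro A B
            rcases hchain.total A.2 B.2 with h | h
            · exact ⟨A, Subset.rfl, h⟩
            · exact ⟨B, h, Subset.rfl⟩
          exact hd.finset_le u
        obtain ⟨z, hz, hzK⟩ := not_disjoint_iff.1 (hcon K K.2)
        exact ⟨z, hz, mem_iInter₂.2 fun L hL => hK L hL hzK⟩
      obtain ⟨z, hz, hzK⟩ := this
      refine hdisj.notMem_of_mem_left (a := z) ⟨by linarith [hz.1], by linarith [hz.2]⟩ fun K hK => ?_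
      exact mem_iInter.1 hzK ⟨K, hK⟩
    have hKc := (hc K hK).isClosed
    have h1 : sSup (K ∩ Icc s (s + m)) ∈ K ∩ Icc s (s + m) :=
      (isCompact_Icc.inter_left hKc).sSup_mem ⟨s, hs K hK, le_rfl, by linarith⟩
    have h2 : sInf (K ∩ Icc (t - m) t) ∈ K ∩ Icc (t - m) t :=
      (isCompact_Icc.inter_left hKc).sInf_mem ⟨t, ht K hK, by linarith, le_rfl⟩
    set u := sSup (K ∩ Icc s (s + m)) with hu
    set v := sInf (K ∩ Icc (t - m) t) with hv
    have hum : u < s + m := by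
      refine lt_of_le_of_ne h1.2.2 fun h => hKd.notMem_of_mem_left (a := u) ⟨h.ge, ?_⟩ h1.1
      linarith [h1.2.2]
    have hvm : t - m < v := by
      refine lt_of_le_of_ne h2.2.1 fun h => hKd.notMem_of_mem_left (a := v) ⟨?_, h.ge⟩ h2.1
      linarith [h2.2.1]
    have huv : γ u = γ v := by
      refine (hc K hK).eq_of_gap u h1.1 v h2.1 (by linarith) ?_
      refine disjoint_left.2 fun z hz hzK => ?_
      by_cases h3 : z ≤ s + m
      · have : z ≤ u := le_csSup (isCompact_Icc.bddAbove.mono inter_subset_right)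
          ⟨hzK, by linarith [hz.1, h1.2.1], h3⟩
        linarith [hz.1]
      · by_cases h4 : t - m ≤ z
        · have : v ≤ z := csInf_le (isCompact_Icc.bddBelow.mono inter_subset_right)
            ⟨hzK, h4, by linarith [hz.2, h2.2.2]⟩
          linarith [hz.2]
        · exact hKd.notMem_of_mem_left (a := z) ⟨by linarith, by linarith⟩ hzK
    refine hUV.notMem_of_mem_left (a := γ u) (hεU ?_) (huv ▸ hηV ?_)
    · rw [mem_ball, Real.dist_eq, abs_lt]
      constructor <;> linarith [h1.2.1]
    · rw [mem_ball, Real.dist_eq, abs_lt]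
      constructor <;> linarith [h2.2.2]

lemma exists_minimal_isLoopErasure {γ : ℝ → X} (hγ : Continuous γ) :
    ∃ K : Set ℝ, IsLoopErasure γ K ∧
      ∀ x ∈ K, ∀ y ∈ K, x < y → γ x = γ y → Disjoint (Ioo x y) K := by
  have h₀ : IsLoopErasure γ (Icc 0 1) := by
    refine ⟨isClosed_Icc, Subset.rfl, by simp, by simp, fun s hs t ht hst hd => ?_⟩
    refine (hd.notMem_of_mem_left (a := (s + t) / 2) ⟨by linarith, by linarith⟩ ⟨?_, ?_⟩).elim
    · linarith [hs.1, ht.1]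
    · linarith [hs.2, ht.2]
  obtain ⟨K, hKsub, hK⟩ := zorn_superset_nonempty {K | IsLoopErasure γ K}
    (fun c hc hch hne => ⟨⋂₀ c, IsLoopErasure.sInter hγ hc hch hne,
      fun K hK => sInter_subset_of_mem hK⟩) _ h₀
  have hKE : IsLoopErasure γ K := hK.prop
  refine ⟨K, hKE, fun x hx y hy hxy hγxy => ?_⟩
  have h' : IsLoopErasure γ (K \ Ioo x y) := by
    refine ⟨hKE.isClosed.sdiff isOpen_Ioo, sdiff_subset.trans hKE.subset, ⟨hKE.zero_mem, ?_⟩,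
      ⟨hKE.one_mem, ?_⟩, ?_⟩
    · exact fun h => absurd h.1 (not_lt.2 (hKE.subset hx).1)
    · exact fun h => absurd h.2 (not_lt.2 (hKE.subset hy).2)
    · rintro s ⟨hs, hs'⟩ t ⟨ht, ht'⟩ hst hd
      rw [disjoint_left] at hd
      by_cases h1 : t ≤ x
      · refine hKE.eq_of_gap s hs t ht hst (disjoint_left.2 fun z hz hzK => ?_)
        exact hd hz ⟨hzK, fun h => by linarith [h.1, hz.2]⟩
      by_cases h2 : y ≤ s
      · refine hKE.eq_of_gap s hs t ht hst (disjoint_left.2 fun z hz hzK => ?_)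
        exact hd hz ⟨hzK, fun h => by linarith [h.2, hz.1]⟩
      have h3 : s ≤ x := not_lt.1 fun h => hs' ⟨h, not_le.1 h2⟩
      have h4 : y ≤ t := not_lt.1 fun h => ht' ⟨not_le.1 h1, h⟩
      have h5 : s = x := by
        refine h3.eq_of_not_lt fun h => hd (a := x) ⟨h, not_le.1 h1⟩ ⟨hx, fun h => h.1.false⟩
      have h6 : t = y := by
        refine (h4.eq_of_not_lt fun h => hd (a := y) ⟨not_le.1 h2, h⟩ ⟨hy, fun h => h.2.false⟩).symm
      rw [h5, h6, hγxy]
  exact disjoint_left.2 fun z hz hzK => ((hK.eq_of_subset h' sdiff_subset).ge hzK).2 hz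

/-- Every path can be replaced by one with convex fibres. -/
lemma exists_continuous_ordConnected_fibres {γ : ℝ → X} (hγ : Continuous γ) :
    ∃ δ : ℝ → X, Continuous δ ∧ δ 0 = γ 0 ∧ δ 1 = γ 1 ∧ δ '' Icc 0 1 ⊆ γ '' Icc 0 1 ∧
      ∀ x ∈ Icc (0 : ℝ) 1, ∀ y ∈ Icc (0 : ℝ) 1, δ x = δ y → ∀ z ∈ Icc x y, δ z = δ x := by
  obtain ⟨K, hK, hmin⟩ := exists_minimal_isLoopErasure hγ
  set r : ℝ → ℝ := fun t => sSup (K ∩ Icc 0 t) with hr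
  set e : ℝ → ℝ := fun t => sInf (K ∩ Icc t 1) with he
  have hrm : ∀ t, 0 ≤ t → r t ∈ K ∩ Icc 0 t := fun t ht =>
    (isCompact_Icc.inter_left hK.isClosed).sSup_mem ⟨0, hK.zero_mem, le_rfl, ht⟩
  have hem : ∀ t, t ≤ 1 → e t ∈ K ∩ Icc t 1 := fun t ht =>
    (isCompact_Icc.inter_left hK.isClosed).sInf_mem ⟨1, hK.one_mem, ht, le_rfl⟩
  have hrle : ∀ t k, k ∈ K → k ≤ t → k ≤ r t := fun t k hk hkt =>
    le_csSup (isCompact_Icc.bddAbove.mono inter_subset_right) ⟨hk, (hK.subset hk).1, hkt⟩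
  have hele : ∀ t k, k ∈ K → t ≤ k → e t ≤ k := fun t k hk hkt =>
    csInf_le (isCompact_Icc.bddBelow.mono inter_subset_right) ⟨hk, hkt, (hK.subset hk).2⟩
  have hre : ∀ t ∈ Icc (0 : ℝ) 1, γ (r t) = γ (e t) := by
    intro t ht
    have h1 := hrm t ht.1
    have h2 := hem t ht.2
    rcases (h1.2.2.trans h2.2.1).eq_or_lt with h | h
    · rw [h]
    · refine hK.eq_of_gap _ h1.1 _ h2.1 h (disjoint_left.2 fun z hz hzK => ?_)
      rcases le_total z t with h3 | h3
      · exact absurd (hrle t z hzK h3) (not_le.2 hz.1)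
      · exact absurd (hele t z hzK h3) (not_le.2 hz.2)
  have hmono : ∀ s t, 0 ≤ s → s ≤ t → r s ≤ r t := fun s t hs hst =>
    hrle t _ (hrm s hs).1 ((hrm s hs).2.2.trans hst)
  have hrK : ∀ k ∈ K, r k = k := fun k hk =>
    le_antisymm (hrm k (hK.subset hk).1).2.2 (hrle k k hk le_rfl)
  have hcont : ContinuousOn (γ ∘ r) (Icc 0 1) := by
    have huc := isCompact_Icc (a := (0 : ℝ)) (b := 1)
      |>.uniformContinuousOn_of_continuous hγ.continuousOn
    rw [Metric.uniformContinuousOn_iff] at huc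
    rw [Metric.continuousOn_iff]
    intro t ht ε hε
    obtain ⟨η, hη, H⟩ := huc ε hε
    have key : ∀ s ∈ Icc (0 : ℝ) 1, ∀ t ∈ Icc (0 : ℝ) 1, s ≤ t → t - s < η →
        dist (γ (r s)) (γ (r t)) < ε := by
      intro s hs t ht hst hlt
      by_cases h : ∃ k ∈ K, s < k ∧ k ≤ t
      · obtain ⟨k, hk, hsk, hkt⟩ := h
        have h1 := hele s k hk hsk.le
        have h2 := hrle t k hk hkt
        have h3 := hem s hs.2
        have h4 := hrm t ht.1
        rw [hre s hs]
        refine H _ (hK.subset h3.1) _ (hK.subset h4.1) ?_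
        rw [Real.dist_eq, abs_lt]
        constructor <;> linarith [h3.2.1, h4.2.2]
      · push Not at h
        have h4 := hrm t ht.1
        have : r t ≤ s := not_lt.1 fun h5 => absurd (h _ h4.1 h5) (not_lt.2 h4.2.2)
        rw [le_antisymm (hmono s t hs.1 hst) (hrle s _ h4.1 this), dist_self]
        exact hε
    refine ⟨η, hη, fun s hs hst => ?_⟩
    rw [Real.dist_eq, abs_lt] at hst
    rcases le_total s t with h | h
    · exact key s hs t ht h (by linarith)
    · rw [dist_comm]
      exact key t ht s hs h (by linarith)
  have hclamp : ∀ t ∈ Icc (0 : ℝ) 1, max 0 (min 1 t) = t := fun t ht => by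
    rw [min_eq_right ht.2, max_eq_right ht.1]
  refine ⟨fun t => γ (r (max 0 (min 1 t))), ?_, ?_, ?_, ?_, ?_⟩
  · refine hcont.comp_continuous (f := fun t : ℝ => max 0 (min 1 t)) (by fun_prop) fun t => ?_
    exact ⟨le_max_left _ _, max_le zero_le_one (min_le_left _ _)⟩
  · simp only [hclamp 0 (by simp), hrK 0 hK.zero_mem]
  · simp only [hclamp 1 (by simp), hrK 1 hK.one_mem]
  · rintro _ ⟨t, ht, rfl⟩
    simp only [hclamp t ht]
    exact ⟨_, hK.subset (hrm t ht.1).1, rfl⟩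
  · intro x hx y hy hxy z hz
    have hz' : z ∈ Icc (0 : ℝ) 1 := ⟨hx.1.trans hz.1, hz.2.trans hy.2⟩
    simp only [hclamp x hx, hclamp y hy, hclamp z hz'] at hxy ⊢
    have h1 := hmono x z hx.1 hz.1
    have h2 := hmono z y hz'.1 hz.2
    rcases h1.eq_or_lt with h3 | h3
    · rw [h3]
    rcases h2.eq_or_lt with h4 | h4
    · rw [h4, hxy]
    exact absurd (hrm z hz'.1).1 (disjoint_left.1 (hmin _ (hrm x hx.1).1 _ (hrm y hy.1).1
      (h3.trans h4) hxy) ⟨h3, h4⟩)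

/-- A curve with convex fibres can be reparametrised to an arc. -/
lemma isArc_of_ordConnected_fibres {δ : ℝ → X} (hδ : Continuous δ)
    (hfib : ∀ x ∈ Icc (0 : ℝ) 1, ∀ y ∈ Icc (0 : ℝ) 1, δ x = δ y → ∀ z ∈ Icc x y, δ z = δ x) :
    IsArc (δ '' Icc 0 1) (δ 0) (δ 1) := by
  set φ : ℚ → ℝ → ℝ := fun q w => min 1 (dist (δ q) (δ w)) with hφ
  set g : ℚ → ℝ → ℝ := fun q t =>
    sSup ((fun l : ℝ => φ q (q + l * (max t q - q))) '' Icc 0 1) with hg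
  have hφ0 : ∀ (q : ℚ) (w : ℝ), 0 ≤ φ q w := fun q w => le_min zero_le_one dist_nonneg
  have hφ1 : ∀ (q : ℚ) (w : ℝ), φ q w ≤ 1 := fun q w => min_le_left _ _
  have hbdd : ∀ (q : ℚ) (t : ℝ), BddAbove ((fun l : ℝ => φ q (q + l * (max t q - q))) '' Icc 0 1) := by
    rintro q t
    refine ⟨1, ?_⟩
    rintro _ ⟨l, -, rfl⟩
    exact hφ1 _ _
  have hgle : ∀ (q : ℚ) (t w : ℝ), w ∈ Icc (q : ℝ) (max t q) → φ q w ≤ g q t := by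
    intro q t w hw
    refine le_csSup (hbdd q t) ?_
    rcases (hw.1.trans hw.2).eq_or_lt with h | h
    · refine ⟨0, by simp, ?_⟩
      have : w = q := le_antisymm (by rw [h]; exact hw.2) hw.1
      simp [this]
    · have h' : 0 < max t q - q := by linarith
      refine ⟨(w - q) / (max t q - q), ⟨div_nonneg (sub_nonneg.2 hw.1) h'.le, ?_⟩, ?_⟩
      · rw [div_le_one h']; linarith [hw.2]
      · simp only [div_mul_cancel₀ _ h'.ne']; congr 1; ring
  have hleg : ∀ (q : ℚ) (t c : ℝ), (∀ w ∈ Icc (q : ℝ) (max t q), φ q w ≤ c) → g q t ≤ c := by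
    intro q t c hc
    refine csSup_le (by simp) ?_
    rintro _ ⟨l, hl, rfl⟩
    have h : (q : ℝ) ≤ max t q := le_max_right _ _
    refine hc _ ⟨?_, ?_⟩
    · nlinarith [hl.1]
    · nlinarith [hl.2]
  have hg0 : ∀ (q : ℚ) (t : ℝ), 0 ≤ g q t := fun q t =>
    (hφ0 q q).trans (hgle q t q ⟨le_rfl, le_max_right _ _⟩)
  have hg1 : ∀ (q : ℚ) (t : ℝ), g q t ≤ 1 := fun q t => hleg q t 1 fun w _ => hφ1 q w
  have hgmono : ∀ q, Monotone (g q) := fun q s t hst => hleg q s _ fun w hw =>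
    hgle q t w ⟨hw.1, hw.2.trans (max_le_max_right _ hst)⟩
  have hgc : ∀ q, Continuous (g q) := fun q => by
    refine IsCompact.continuous_sSup (f := fun (t l : ℝ) => φ q (q + l * (max t q - q)))
      isCompact_Icc ?_
    simp only [hφ, Function.HasUncurry.uncurry, id]
    fun_prop
  have hsum : Summable fun q : ℚ => (1 / 2 : ℝ) ^ Encodable.encode q :=
    summable_geometric_two_encode
  set h : ℝ → ℝ := fun t => ∑' q : ℚ, (1 / 2 : ℝ) ^ Encodable.encode q * g q t with hh
  have hle : ∀ (q : ℚ) (t : ℝ), (1 / 2 : ℝ) ^ Encodable.encode q * g q t ≤ (1 / 2 : ℝ) ^ Encodable.encode q :=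
    fun q t => mul_le_of_le_one_right (by positivity) (hg1 q t)
  have hnn : ∀ (q : ℚ) (t : ℝ), 0 ≤ (1 / 2 : ℝ) ^ Encodable.encode q * g q t :=
    fun q t => mul_nonneg (by positivity) (hg0 q t)
  have hsumg : ∀ t, Summable fun q : ℚ => (1 / 2 : ℝ) ^ Encodable.encode q * g q t := fun t =>
    hsum.of_nonneg_of_le (fun q => hnn q t) (fun q => hle q t)
  have hhc : Continuous h := by
    refine continuous_tsum (fun q => (hgc q).const_mul _) hsum fun q t => ?_
    rw [Real.norm_of_nonneg (hnn q t)]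
    exact hle q t
  have hmono : Monotone h := fun s t hst => (hsumg s).tsum_le_tsum (fun q =>
    mul_le_mul_of_nonneg_left (hgmono q hst) (by positivity)) (hsumg t)
  have hlt : ∀ x y, x < y → δ x ≠ δ y → h x < h y := by
    intro x y hxy hne
    obtain ⟨ε, hε, hεs⟩ := Metric.isOpen_iff.1
      ((isOpen_compl_singleton (x := δ y)).preimage hδ) x hne
    obtain ⟨q, hq1, hq2⟩ := exists_rat_btwn (lt_min hxy (by linarith : x < x + ε))
    have hqy : (q : ℝ) < y := hq2.trans_le (min_le_left _ _)
    have hqne : δ q ≠ δ y := hεs (by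
      rw [mem_ball, Real.dist_eq, abs_lt]
      constructor <;> linarith [min_le_right y (x + ε)])
    refine (hsumg x).tsum_lt_tsum (i := q) (fun q =>
      mul_le_mul_of_nonneg_left (hgmono q hxy.le) (by positivity)) ?_ (hsumg y)
    refine mul_lt_mul_of_pos_left ?_ (by positivity)
    refine (hleg q x 0 fun w hw => ?_).trans_lt ?_
    · rw [max_eq_right hq1.le] at hw
      have : w = q := le_antisymm hw.2 hw.1
      simp [hφ, this]
    · refine lt_of_lt_of_le ?_ (hgle q y y ⟨hqy.le, le_max_left _ _⟩)
      exact lt_min one_pos (dist_pos.2 hqne)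
  have heq : ∀ x ∈ Icc (0 : ℝ) 1, ∀ y ∈ Icc (0 : ℝ) 1, x ≤ y → δ x = δ y → h x = h y := by
    intro x hx y hy hxy hδxy
    refine tsum_congr fun q => ?_
    congr 1
    refine le_antisymm (hgmono q hxy) (hleg q y _ fun w hw => ?_)
    by_cases hwx : w ≤ max x q
    · exact hgle q x w ⟨hw.1, hwx⟩
    · rw [not_le, max_lt_iff] at hwx
      have hwy : w ≤ y := by
        rcases le_max_iff.1 hw.2 with h | h
        · exact h
        · exact absurd h (not_le.2 hwx.2)
      have hwδ := hfib x hx y hy hδxy w ⟨hwx.1.le, hwy⟩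
      rcases le_total (q : ℝ) x with hqx | hqx
      · refine le_trans ?_ (hgle q x x ⟨hqx, le_max_left _ _⟩)
        simp [hφ, hwδ]
      · have hqδ := hfib x hx y hy hδxy q ⟨hqx, hwx.2.le.trans hwy⟩
        refine le_trans ?_ (hg0 q x)
        simp [hφ, hwδ, hqδ]
  have heq' : ∀ x ∈ Icc (0 : ℝ) 1, ∀ y ∈ Icc (0 : ℝ) 1, h x = h y → δ x = δ y := by
    intro x hx y hy hxy
    by_contra hne
    rcases lt_trichotomy x y with h1 | h1 | h1
    · exact (hlt x y h1 hne).ne hxy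
    · exact hne (h1 ▸ rfl)
    · exact (hlt y x h1 (Ne.symm hne)).ne' hxy
  have himg : h '' Icc 0 1 = Icc (h 0) (h 1) := by
    refine Subset.antisymm ?_ (intermediate_value_Icc zero_le_one hhc.continuousOn)
    rintro _ ⟨t, ht, rfl⟩
    exact ⟨hmono ht.1, hmono ht.2⟩
  have hex : ∀ v, ∃ t, v ∈ Icc (h 0) (h 1) → t ∈ Icc (0 : ℝ) 1 ∧ h t = v := by
    intro v
    by_cases hv : v ∈ Icc (h 0) (h 1)
    · obtain ⟨t, ht, rfl⟩ := himg.ge hv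
      exact ⟨t, fun _ => ⟨ht, rfl⟩⟩
    · exact ⟨0, fun h => absurd h hv⟩
  choose k hk using hex
  have hkδ : ∀ t ∈ Icc (0 : ℝ) 1, δ (k (h t)) = δ t := fun t ht => by
    have := hk (h t) (himg.le ⟨t, ht, rfl⟩)
    exact heq' _ this.1 _ ht this.2
  refine ⟨δ ∘ k, h 0, h 1, hmono zero_le_one, ?_, ?_, hkδ 0 (by simp), hkδ 1 (by simp), ?_⟩
  · rw [continuousOn_iff_isClosed]
    intro F hF
    refine ⟨h '' (Icc 0 1 ∩ δ ⁻¹' F),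
      ((isCompact_Icc.inter_right (hF.preimage hδ)).image hhc).isClosed, ?_⟩
    ext v
    constructor
    · rintro ⟨hvF, hv⟩
      exact ⟨⟨k v, ⟨(hk v hv).1, hvF⟩, (hk v hv).2⟩, hv⟩
    · rintro ⟨⟨t, ⟨ht, htF⟩, rfl⟩, hv⟩
      refine ⟨?_, hv⟩
      simpa [hkδ t ht] using htF
  · intro v hv w hw hvw
    have h1 := hk v hv
    have h2 := hk w hw
    rw [← h1.2, ← h2.2]
    rcases le_total (k v) (k w) with h3 | h3
    · exact heq _ h1.1 _ h2.1 h3 hvw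
    · exact (heq _ h2.1 _ h1.1 h3 hvw.symm).symm
  · ext z
    constructor
    · rintro ⟨v, hv, rfl⟩
      exact ⟨k v, (hk v hv).1, rfl⟩
    · rintro ⟨t, ht, rfl⟩
      exact ⟨h t, himg.le ⟨t, ht, rfl⟩, hkδ t ht⟩

lemma JoinedIn.exists_isArc {F : Set X} {x y : X} (h : JoinedIn F x y) :
    ∃ A ⊆ F, IsArc A x y := by
  obtain ⟨p, hp⟩ := h
  obtain ⟨δ, hδ, h0, h1, hsub, hfib⟩ := exists_continuous_ordConnected_fibres p.continuous_extend
  refine ⟨δ '' Icc 0 1, ?_, ?_⟩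
  · refine hsub.trans ?_
    rintro _ ⟨t, ht, rfl⟩
    rw [p.extend_apply ht]
    exact hp _
  · simpa [h0, h1] using isArc_of_ordConnected_fibres hδ hfib

end PathToArc

section Arcs

lemma InjOn.image_Icc_inter {X : Type*} {γ : ℝ → X} {s m t : ℝ} (hi : InjOn γ (Icc s t)) (hs : s ≤ m)
    (ht : m ≤ t) : γ '' Icc s m ∩ γ '' Icc m t = {γ m} := by
  rw [← hi.image_inter (Icc_subset_Icc_right ht) (Icc_subset_Icc_left hs), Icc_inter_Icc]
  simp [hs, ht]

variable {X : Type*} [MetricSpace X] {A B K V : Set X} {x y z : X}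

lemma isArc_image {α : ℝ → X} {c d s t : ℝ} (hα : ContinuousOn α (Icc c d))
    (hinj : InjOn α (Icc c d)) (hs : c ≤ s) (hst : s ≤ t) (ht : t ≤ d) :
    IsArc (α '' Icc s t) (α s) (α t) :=
  ⟨α, s, t, hst, hα.mono (Icc_subset_Icc hs ht), hinj.mono (Icc_subset_Icc hs ht), rfl, rfl, rfl⟩

lemma IsArc.symm (h : IsArc A x y) : IsArc A y x := by
  obtain ⟨γ, s, t, hst, hc, hi, rfl, rfl, rfl⟩ := h
  have hmaps : MapsTo (fun u : ℝ => -u) (Icc (-t) (-s)) (Icc s t) := fun u hu =>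
    ⟨by linarith [hu.2], by linarith [hu.1]⟩
  refine ⟨fun u => γ (-u), -t, -s, by linarith, hc.comp continuous_neg.continuousOn hmaps, ?_,
    by simp, by simp, ?_⟩
  · intro u hu v hv huv
    exact neg_injective (hi (hmaps hu) (hmaps hv) huv)
  · have := image_comp γ (fun u : ℝ => -u) (Icc (-t) (-s))
    simpa [Function.comp_def] using this

lemma isArc_singleton (x : X) : IsArc {x} x x :=
  ⟨fun _ => x, 0, 0, le_rfl, continuousOn_const, by simp, rfl, rfl, by simp⟩

lemma IsArc.isCompact (h : IsArc A x y) : IsCompact A := by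
  obtain ⟨γ, s, t, hst, hc, hi, rfl, rfl, rfl⟩ := h
  exact isCompact_Icc.image_of_continuousOn hc

lemma IsArc.isClosed (h : IsArc A x y) : IsClosed A := h.isCompact.isClosed

lemma IsArc.left_mem (h : IsArc A x y) : x ∈ A := by
  obtain ⟨γ, s, t, hst, hc, hi, rfl, rfl, rfl⟩ := h
  exact mem_image_of_mem γ ⟨le_rfl, hst⟩

lemma IsArc.right_mem (h : IsArc A x y) : y ∈ A := h.symm.left_mem

lemma IsArc.eq_singleton (h : IsArc A x x) : A = {x} := by
  obtain ⟨γ, s, t, hst, hc, hi, rfl, h2, rfl⟩ := h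
  have : t = s := hi ⟨hst, le_rfl⟩ ⟨le_rfl, hst⟩ h2
  simp [this]

/-- The first point of an arc on a closed set. -/
lemma IsArc.exists_first_hit (h : IsArc A x y) (hK : IsClosed K) (hne : (A ∩ K).Nonempty) :
    ∃ z A₁ A₂, IsArc A₁ x z ∧ IsArc A₂ z y ∧ A₁ ∪ A₂ = A ∧ A₁ ∩ A₂ = {z} ∧ A₁ ∩ K = {z} := by
  obtain ⟨γ, s, t, hst, hc, hi, rfl, rfl, rfl⟩ := h
  have hcl : IsClosed (Icc s t ∩ γ ⁻¹' K) := hc.preimage_isClosed_of_isClosed isClosed_Icc hK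
  have hcp : IsCompact (Icc s t ∩ γ ⁻¹' K) :=
    isCompact_Icc.of_isClosed_subset hcl inter_subset_left
  have hm := hcp.sInf_mem (by
    obtain ⟨_, ⟨u, hu, rfl⟩, huK⟩ := hne
    exact ⟨u, hu, huK⟩)
  set m := sInf (Icc s t ∩ γ ⁻¹' K) with hmdef
  have hle : ∀ u ∈ Icc s t, γ u ∈ K → m ≤ u := fun u hu huK => csInf_le hcp.bddBelow ⟨hu, huK⟩
  refine ⟨γ m, γ '' Icc s m, γ '' Icc m t, isArc_image hc hi le_rfl hm.1.1 hm.1.2,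
    isArc_image hc hi hm.1.1 hm.1.2 le_rfl, ?_, InjOn.image_Icc_inter hi hm.1.1 hm.1.2, ?_⟩
  · rw [← image_union, Icc_union_Icc_eq_Icc hm.1.1 hm.1.2]
  · ext w
    constructor
    · rintro ⟨⟨u, hu, rfl⟩, huK⟩
      have := hle u ⟨hu.1, hu.2.trans hm.1.2⟩ huK
      rw [le_antisymm hu.2 this]
      rfl
    · rintro rfl
      exact ⟨⟨m, ⟨hm.1.1, le_rfl⟩, rfl⟩, hm.2⟩

lemma IsArc.exists_split (h : IsArc A x y) (hz : z ∈ A) :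
    ∃ A₁ A₂, IsArc A₁ x z ∧ IsArc A₂ z y ∧ A₁ ∪ A₂ = A ∧ A₁ ∩ A₂ = {z} := by
  obtain ⟨w, A₁, A₂, h1, h2, h3, h4, h5⟩ := h.exists_first_hit (K := {z}) isClosed_singleton
    ⟨z, hz, rfl⟩
  obtain rfl : w = z := (h5.ge (mem_singleton w)).2
  exact ⟨A₁, A₂, h1, h2, h3, h4⟩

/-- Splitting an arc where it first enters an open set. -/
lemma IsArc.exists_first_entry (h : IsArc A x y) (hV : IsOpen V) (hx : x ∉ V) :
    ∃ z A₁ A₂, IsArc A₁ x z ∧ IsArc A₂ z y ∧ A₁ ∪ A₂ = A ∧ A₁ ∩ A₂ = {z} ∧ A₁ ∩ V = ∅ := by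
  obtain ⟨γ, s, t, hst, hc, hi, rfl, rfl, rfl⟩ := h
  set S := {u ∈ Icc s t | ∀ v ∈ Icc s u, γ v ∉ V} with hS
  have hsS : s ∈ S := ⟨⟨le_rfl, hst⟩, fun v hv => by rwa [le_antisymm hv.2 hv.1]⟩
  have hbdd : BddAbove S := ⟨t, fun u hu => hu.1.2⟩
  set m := sSup S with hm
  have hsm : s ≤ m := le_csSup hbdd hsS
  have hmt : m ≤ t := csSup_le ⟨s, hsS⟩ fun u hu => hu.1.2
  have hlt : ∀ v, s ≤ v → v < m → γ v ∉ V := by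
    intro v hv hvm
    obtain ⟨u, hu, hvu⟩ := exists_lt_of_lt_csSup ⟨s, hsS⟩ hvm
    exact hu.2 v ⟨hv, hvu.le⟩
  have hmV : γ m ∉ V := by
    rcases hsm.eq_or_lt with h | h
    · rwa [← h]
    · have hcl : IsClosed (Icc s t ∩ γ ⁻¹' Vᶜ) :=
        hc.preimage_isClosed_of_isClosed isClosed_Icc hV.isClosed_compl
      have : Ico s m ⊆ Icc s t ∩ γ ⁻¹' Vᶜ := fun v hv =>
        ⟨⟨hv.1, hv.2.le.trans hmt⟩, hlt v hv.1 hv.2⟩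
      have := closure_minimal this hcl
      rw [closure_Ico h.ne] at this
      exact (this ⟨hsm, le_rfl⟩).2
  refine ⟨γ m, γ '' Icc s m, γ '' Icc m t, isArc_image hc hi le_rfl hsm hmt,
    isArc_image hc hi hsm hmt le_rfl, ?_, InjOn.image_Icc_inter hi hsm hmt, ?_⟩
  · rw [← image_union, Icc_union_Icc_eq_Icc hsm hmt]
  · rw [eq_empty_iff_forall_notMem]
    rintro _ ⟨⟨u, hu, rfl⟩, huV⟩
    rcases hu.2.eq_or_lt with h | h
    · exact hmV (h ▸ huV)
    · exact hlt u hu.1 h huV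

/-- A nondegenerate arc can be parametrised by any nondegenerate interval. -/
lemma IsArc.exists_param (h : IsArc A x y) (hne : x ≠ y) {c d : ℝ} (hcd : c < d) :
    ∃ γ : ℝ → X, ContinuousOn γ (Icc c d) ∧ InjOn γ (Icc c d) ∧ γ c = x ∧ γ d = y ∧
      γ '' Icc c d = A := by
  obtain ⟨γ, s, t, hst, hc, hi, rfl, rfl, rfl⟩ := h
  have hst' : s < t := hst.lt_of_ne fun h => hne (h ▸ rfl)
  set k := (t - s) / (d - c) with hk
  have hdc : 0 < d - c := by linarith
  have hk0 : 0 < k := div_pos (by linarith) hdc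
  have hkm : k * (d - c) = t - s := div_mul_cancel₀ _ hdc.ne'
  set φ : ℝ → ℝ := fun u => s + k * (u - c) with hφ
  have hmaps : φ '' Icc c d = Icc s t := by
    ext u
    constructor
    · rintro ⟨v, hv, rfl⟩
      have := hv.1; have := hv.2
      constructor
      · simp only [hφ]; nlinarith
      · simp only [hφ]; nlinarith
    · intro hu
      refine ⟨c + (u - s) / k, ⟨?_, ?_⟩, ?_⟩
      · have : 0 ≤ (u - s) / k := div_nonneg (by linarith [hu.1]) hk0.le
        linarith
      · have : (u - s) / k ≤ d - c := by rw [div_le_iff₀ hk0]; linarith [hu.2]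
        linarith
      · simp only [hφ]; field_simp; ring
  have hφi : InjOn φ (Icc c d) := fun u _ v _ huv => by
    simp only [hφ] at huv
    have := mul_left_cancel₀ hk0.ne' (add_left_cancel huv)
    linarith
  refine ⟨γ ∘ φ, hc.comp (by fun_prop) (mapsTo_iff_image_subset.2 hmaps.le),
    hi.comp hφi (mapsTo_iff_image_subset.2 hmaps.le), ?_, ?_, by rw [image_comp, hmaps]⟩
  · simp [hφ]
  · simp only [hφ, Function.comp, hkm]; congr 1; ring

lemma ContinuousOn.if_le {f g : ℝ → X} {c m d : ℝ} (hcm : c ≤ m) (hmd : m ≤ d)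
    (hf : ContinuousOn f (Icc c m)) (hg : ContinuousOn g (Icc m d)) (hfg : f m = g m) :
    ContinuousOn (fun u => if u ≤ m then f u else g u) (Icc c d) := by
  rw [← Icc_union_Icc_eq_Icc hcm hmd]
  refine ContinuousOn.union_of_isClosed ?_ ?_ isClosed_Icc isClosed_Icc
  · refine hf.congr fun u hu => ?_
    simp [hu.2]
  · refine hg.congr fun u hu => ?_
    rcases hu.1.eq_or_lt with h | h
    · simp [← h, hfg]
    · simp [h]

lemma IsArc.trans (hA : IsArc A x y) (hB : IsArc B y z) (hAB : A ∩ B ⊆ {y}) :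
    IsArc (A ∪ B) x z := by
  by_cases hyz : y = z
  · subst hyz
    rw [hB.eq_singleton, union_eq_self_of_subset_right (singleton_subset_iff.2 hA.right_mem)]
    exact hA
  obtain ⟨f, s, m, hsm, hfc, hfi, rfl, hfm, rfl⟩ := hA
  obtain ⟨g, hgc, hgi, hgm, rfl, rfl⟩ := hB.exists_param hyz (lt_add_one m)
  have hmt : m ≤ m + 1 := by linarith
  have him1 : ∀ u ∈ Icc s m, (fun u => if u ≤ m then f u else g u) u = f u := fun u hu => by
    simp [hu.2]
  have him2 : ∀ u ∈ Icc m (m + 1), (fun u => if u ≤ m then f u else g u) u = g u := fun u hu => by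
    rcases hu.1.eq_or_lt with h | h
    · simp [← h, hfm, hgm]
    · simp [h]
  have key : ∀ u ∈ Icc s (m + 1), ∀ v ∈ Icc s (m + 1), u ≤ m → m < v → f u ≠ g v := by
    intro u hu v hv hum hmv huv
    have h1 : g v ∈ ({y} : Set X) := hAB ⟨huv ▸ mem_image_of_mem f ⟨hu.1, hum⟩,
      mem_image_of_mem g ⟨hmv.le, hv.2⟩⟩
    exact hmv.ne' (hgi ⟨hmv.le, hv.2⟩ ⟨le_rfl, hmt⟩ (h1.trans hgm.symm))
  refine ⟨fun u => if u ≤ m then f u else g u, s, m + 1, by linarith,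
    ContinuousOn.if_le hsm hmt hfc hgc (hfm.trans hgm.symm), ?_, by simp [hsm], by simp, ?_⟩
  · intro u hu v hv huv
    by_cases h1 : u ≤ m <;> by_cases h2 : v ≤ m <;> simp only [h1, h2, if_true, if_false] at huv
    · exact hfi ⟨hu.1, h1⟩ ⟨hv.1, h2⟩ huv
    · exact (key u hu v hv h1 (not_le.1 h2) huv).elim
    · exact (key v hv u hu h2 (not_le.1 h1) huv.symm).elim
    · exact hgi ⟨(not_le.1 h1).le, hu.2⟩ ⟨(not_le.1 h2).le, hv.2⟩ huv
  · rw [← Icc_union_Icc_eq_Icc hsm hmt, image_union, image_congr him1, image_congr him2]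

lemma IsArc.joinedIn (h : IsArc A x y) : JoinedIn A x y := by
  by_cases hxy : x = y
  · subst hxy
    exact JoinedIn.refl h.left_mem
  obtain ⟨γ, hc, hi, rfl, rfl, rfl⟩ := h.exists_param hxy zero_lt_one
  exact JoinedIn.ofLine hc rfl rfl Subset.rfl

end Arcs

section Jordan

variable {X : Type} [MetricSpace X] {A B J : Set X} {x y z : X}

lemma IsArc.isJordanCurve_union (hA : IsArc A x y) (hB : IsArc B x y) (hxy : x ≠ y)
    (hAB : A ∩ B ⊆ {x, y}) : IsJordanCurve (A ∪ B) := by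
  obtain ⟨f, hfc, hfi, hf0, hf1, rfl⟩ := hA.exists_param hxy (c := 0) (d := 1 / 2) (by norm_num)
  obtain ⟨g, hgc, hgi, hg0, hg1, rfl⟩ :=
    hB.symm.exists_param hxy.symm (c := 1 / 2) (d := 1) (by norm_num)
  set F : ℝ → X := fun u => if u ≤ 1 / 2 then f u else g u with hF
  have him1 : ∀ u ∈ Icc (0 : ℝ) (1 / 2), F u = f u := fun u hu => if_pos hu.2
  have him2 : ∀ u ∈ Icc (1 / 2 : ℝ) 1, F u = g u := fun u hu => by
    rcases hu.1.eq_or_lt with h | h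
    · rw [him1 u ⟨by linarith, h.ge⟩, ← h, hf1, hg0]
    · exact if_neg (not_le.2 h)
  have hFc : ContinuousOn F (Icc 0 1) :=
    ContinuousOn.if_le (by norm_num) (by norm_num) hfc hgc (hf1.trans hg0.symm)
  have hF01 : F 0 = F 1 := by
    rw [him1 0 (by norm_num), him2 1 (by norm_num), hf0, hg1]
  have key : ∀ u, 0 ≤ u → u ≤ 1 / 2 → ∀ v, 1 / 2 < v → v < 1 → f u ≠ g v := by
    intro u hu hu' v hv hv' huv
    have hgv : g v ∈ g '' Icc (1 / 2) 1 := mem_image_of_mem g ⟨hv.le, hv'.le⟩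
    rcases hAB ⟨huv ▸ mem_image_of_mem f ⟨hu, hu'⟩, hgv⟩ with h | h
    · exact hv'.ne (hgi ⟨hv.le, hv'.le⟩ (by norm_num) (h.trans hg1.symm))
    · exact hv.ne' (hgi ⟨hv.le, hv'.le⟩ (by norm_num) (Eq.trans h hg0.symm))
  have hFi : InjOn F (Ico 0 1) := by
    intro u hu v hv huv
    by_cases h1 : u ≤ 1 / 2 <;> by_cases h2 : v ≤ 1 / 2 <;>
      simp only [hF, h1, h2, if_true, if_false] at huv
    · exact hfi ⟨hu.1, h1⟩ ⟨hv.1, h2⟩ huv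
    · exact (key u hu.1 h1 v (not_le.1 h2) hv.2 huv).elim
    · exact (key v hv.1 h2 u (not_le.1 h1) hu.2 huv.symm).elim
    · exact hgi ⟨(not_le.1 h1).le, hu.2.le⟩ ⟨(not_le.1 h2).le, hv.2.le⟩ huv
  have hFimg : F '' Icc 0 1 = f '' Icc 0 (1 / 2) ∪ g '' Icc (1 / 2) 1 := by
    rw [← Icc_union_Icc_eq_Icc (by norm_num : (0 : ℝ) ≤ 1 / 2) (by norm_num : (1 / 2 : ℝ) ≤ 1),
      image_union, image_congr him1, image_congr him2]
  have : Fact ((0 : ℝ) < 1) := ⟨one_pos⟩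
  set G : AddCircle (1 : ℝ) → X := AddCircle.liftIco 1 0 F with hG
  have hGF : ∀ u ∈ Ico (0 : ℝ) 1, G u = F u := fun u hu => AddCircle.liftIco_zero_coe_apply hu
  have hrep : ∀ p : AddCircle (1 : ℝ), ∃ u ∈ Ico (0 : ℝ) 1, (u : AddCircle (1 : ℝ)) = p := by
    intro p
    refine ⟨AddCircle.equivIco 1 0 p, ?_, AddCircle.coe_equivIco⟩
    simpa using (AddCircle.equivIco 1 0 p).2
  have hGc : Continuous G := AddCircle.liftIco_zero_continuous hF01 hFc
  have hGi : Function.Injective G := by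
    intro p q hpq
    obtain ⟨u, hu, rfl⟩ := hrep p
    obtain ⟨v, hv, rfl⟩ := hrep q
    rw [hGF u hu, hGF v hv] at hpq
    rw [hFi hu hv hpq]
  have hGr : range G = f '' Icc 0 (1 / 2) ∪ g '' Icc (1 / 2) 1 := by
    rw [← hFimg]
    ext w
    constructor
    · rintro ⟨p, rfl⟩
      obtain ⟨u, hu, rfl⟩ := hrep p
      exact ⟨u, ⟨hu.1, hu.2.le⟩, (hGF u hu).symm⟩
    · rintro ⟨u, hu, rfl⟩
      rcases hu.2.eq_or_lt with h | h
      · exact ⟨(0 : ℝ), by rw [hGF 0 (by simp), h, hF01]⟩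
      · exact ⟨u, hGF u ⟨hu.1, h⟩⟩
  exact ⟨((hGc.isClosedEmbedding hGi).isEmbedding.toHomeomorph).trans (Homeomorph.setCongr hGr)⟩

lemma IsJordanCurve.exists_arcs (hJ : IsJordanCurve J) (hx : x ∈ J) (hy : y ∈ J) (hxy : x ≠ y) :
    ∃ P Q, IsArc P x y ∧ IsArc Q x y ∧ P ∪ Q = J ∧ P ∩ Q = {x, y} := by
  obtain ⟨φ⟩ := hJ
  have : Fact ((0 : ℝ) < 1) := ⟨one_pos⟩
  obtain ⟨a, ha⟩ := QuotientAddGroup.mk_surjective (φ.symm ⟨x, hx⟩)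
  have hrep : ∀ p : AddCircle (1 : ℝ), ∃ u ∈ Ico a (a + 1), (u : AddCircle (1 : ℝ)) = p :=
    fun p => ⟨AddCircle.equivIco 1 a p, (AddCircle.equivIco 1 a p).2, AddCircle.coe_equivIco⟩
  obtain ⟨c, hc, hcy⟩ := hrep (φ.symm ⟨y, hy⟩)
  set γ : ℝ → X := fun u => φ (u : AddCircle (1 : ℝ)) with hγ
  have hγc : Continuous γ :=
    continuous_subtype_val.comp (φ.continuous.comp (AddCircle.continuous_mk' 1))
  have hγi : InjOn γ (Ico a (a + 1)) := fun u hu v hv huv =>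
    (AddCircle.coe_eq_coe_iff_of_mem_Ico hu hv).1 (φ.injective (Subtype.ext huv))
  have hγa : γ a = x := by
    simp only [hγ]
    exact congrArg Subtype.val ((congrArg φ ha).trans (φ.apply_symm_apply _))
  have hγc' : γ c = y := by
    simp only [hγ, hcy, φ.apply_symm_apply]
  have hγa' : γ (a + 1) = x := by
    rw [← hγa]
    simp only [hγ, AddCircle.coe_add_period]
  have hac : a < c := hc.1.lt_of_ne fun h => hxy (by rw [← hγa, ← hγc', h])
  have hγi2 : InjOn γ (Icc c (a + 1)) := by
    have aux : ∀ u ∈ Icc c (a + 1), u < a + 1 → γ u ≠ γ (a + 1) := fun u hu hua h => by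
      rw [hγa', ← hγa] at h
      have := hγi ⟨hc.1.trans hu.1, hua⟩ ⟨le_rfl, by linarith⟩ h
      linarith [hu.1]
    intro u hu v hv huv
    rcases hu.2.eq_or_lt with h1 | h1 <;> rcases hv.2.eq_or_lt with h2 | h2
    · rw [h1, h2]
    · exact (aux v hv h2 (by rw [← huv, h1])).elim
    · exact (aux u hu h1 (by rw [huv, h2])).elim
    · exact hγi ⟨hc.1.trans hu.1, h1⟩ ⟨hc.1.trans hv.1, h2⟩ huv
  have hJimg : γ '' Icc a c ∪ γ '' Icc c (a + 1) = J := by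
    rw [← image_union, Icc_union_Icc_eq_Icc hc.1 hc.2.le]
    ext w
    constructor
    · rintro ⟨u, -, rfl⟩
      exact (φ u).2
    · intro hw
      obtain ⟨u, hu, huw⟩ := hrep (φ.symm ⟨w, hw⟩)
      refine ⟨u, ⟨hu.1, hu.2.le⟩, ?_⟩
      simp only [hγ, huw, φ.apply_symm_apply]
  have hP : IsArc (γ '' Icc a c) x y := by
    have := isArc_image hγc.continuousOn (hγi.mono (Icc_subset_Ico_right hc.2)) le_rfl hc.1 le_rfl
    rwa [hγa, hγc'] at this
  have hQ : IsArc (γ '' Icc c (a + 1)) y x := by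
    have := isArc_image hγc.continuousOn hγi2 le_rfl hc.2.le le_rfl
    rwa [hγa', hγc'] at this
  refine ⟨_, _, hP, hQ.symm, hJimg, Subset.antisymm ?_ ?_⟩
  · rintro _ ⟨⟨u, hu, rfl⟩, v, hv, hvu⟩
    rcases hv.2.eq_or_lt with h | h
    · left
      rw [← hvu, h, hγa']
    · right
      have := hγi ⟨hc.1.trans hv.1, h⟩ ⟨hu.1, hu.2.trans_lt hc.2⟩ hvu
      rw [le_antisymm hu.2 (this ▸ hv.1), hγc']
      rfl
  · rintro w (rfl | rfl)
    · exact ⟨hP.left_mem, hQ.right_mem⟩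
    · exact ⟨hP.right_mem, hQ.left_mem⟩

lemma IsJordanCurve.exists_isArc_through (hJ : IsJordanCurve J) (hx : x ∈ J) (hy : y ∈ J)
    (hxy : x ≠ y) (hz : z ∈ J) : ∃ P ⊆ J, IsArc P x y ∧ z ∈ P := by
  obtain ⟨P, Q, hP, hQ, rfl, -⟩ := hJ.exists_arcs hx hy hxy
  rcases hz with h | h
  · exact ⟨P, subset_union_left, hP, h⟩
  · exact ⟨Q, subset_union_right, hQ, h⟩

lemma IsJordanCurve.exists_isArc_avoiding (hJ : IsJordanCurve J) (hx : x ∈ J) (hy : y ∈ J)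
    (hxz : x ≠ z) (hyz : y ≠ z) : ∃ P ⊆ J, IsArc P x y ∧ z ∉ P := by
  by_cases hxy : x = y
  · subst hxy
    exact ⟨{x}, singleton_subset_iff.2 hx, isArc_singleton x, by simpa using hxz.symm⟩
  obtain ⟨P, Q, hP, hQ, rfl, hPQ⟩ := hJ.exists_arcs hx hy hxy
  by_cases hz : z ∈ P
  · refine ⟨Q, subset_union_right, hQ, fun hzQ => ?_⟩
    rcases hPQ.le ⟨hz, hzQ⟩ with h | h
    · exact hxz h.symm
    · exact hyz (Eq.symm h)
  · exact ⟨P, subset_union_left, hP, hz⟩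

lemma IsJordanCurve.isClosed (hJ : IsJordanCurve J) : IsClosed J := by
  obtain ⟨φ⟩ := hJ
  have : Fact ((0 : ℝ) < 1) := ⟨one_pos⟩
  have : CompactSpace J := φ.compactSpace
  exact (isCompact_iff_compactSpace.2 this).isClosed

end Jordan

section Concatenation

variable {X : Type*} [MetricSpace X]

lemma locallyFinite_Icc_natCast : LocallyFinite fun n : ℕ => Icc (n : ℝ) (n + 1) := by
  intro t
  refine ⟨Iio (t + 1), Iio_mem_nhds (by linarith), (finite_Iic ⌈t + 1⌉₊).subset ?_⟩
  rintro n ⟨u, hu, hut⟩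
  have : (n : ℝ) ≤ ⌈t + 1⌉₊ := hu.1.trans (hut.le.trans (Nat.le_ceil _))
  exact_mod_cast this

/-- Concatenating infinitely many paths that shrink to a point. -/
lemma joinedIn_iUnion_of_shrinking {x : ℕ → X} {E : ℕ → Set X} {a : X}
    (hj : ∀ k, JoinedIn (E k) (x k) (x (k + 1)))
    (hE : ∀ r > 0, ∃ N, ∀ k ≥ N, E k ⊆ ball a r) : JoinedIn ((⋃ k, E k) ∪ {a}) (x 0) a := by
  choose p hp using hj
  set Γ : ℝ → X := fun t => (p ⌊t⌋₊).extend (t - ⌊t⌋₊) with hΓ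
  have hΓE : ∀ t, Γ t ∈ E ⌊t⌋₊ := fun t => by
    simp only [hΓ, Path.extend, IccExtend]
    exact hp _ _
  have hΓeq : ∀ n : ℕ, ∀ t ∈ Icc (n : ℝ) (n + 1), Γ t = (p n).extend (t - n) := by
    intro n t ht
    rcases ht.2.eq_or_lt with h | h
    · have hf : ⌊t⌋₊ = n + 1 := by
        rw [h]
        exact_mod_cast Nat.floor_natCast (R := ℝ) (n + 1)
      have h1 : t - ((n + 1 : ℕ) : ℝ) = 0 := by push_cast; linarith
      have h2 : t - (n : ℝ) = 1 := by linarith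
      simp only [hΓ]
      rw [hf, h1, h2, Path.extend_zero, Path.extend_one]
    · have hf : ⌊t⌋₊ = n := (Nat.floor_eq_iff (n.cast_nonneg.trans ht.1)).2 ⟨ht.1, h⟩
      simp only [hΓ]
      rw [hf]
  have hIci : (⋃ n : ℕ, Icc (n : ℝ) (n + 1)) = Ici 0 := by
    ext t
    simp only [mem_iUnion, mem_Ici]
    refine ⟨fun ⟨n, hn⟩ => n.cast_nonneg.trans hn.1, fun ht => ?_⟩
    exact ⟨⌊t⌋₊, Nat.floor_le ht, (Nat.lt_floor_add_one t).le⟩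
  have hΓc : ContinuousOn Γ (Ici 0) := by
    rw [← hIci]
    refine locallyFinite_Icc_natCast.continuousOn_iUnion (fun n => isClosed_Icc) fun n => ?_
    refine ContinuousOn.congr ?_ (hΓeq n)
    exact ((p n).continuous_extend.comp (continuous_id.sub continuous_const)).continuousOn
  set γ : ℝ → X := fun t => if t < 1 then Γ (t / (1 - t)) else a with hγ
  have hγc : ContinuousOn γ (Icc 0 1) := by
    intro t ht
    rcases ht.2.eq_or_lt with h | h
    · subst h
      rw [Metric.continuousWithinAt_iff]
      intro r hr
      obtain ⟨N, hN⟩ := hE r hr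
      refine ⟨1 / (N + 1), by positivity, fun u hu hut => ?_⟩
      have hγ1 : γ 1 = a := if_neg (lt_irrefl _)
      rw [hγ1]
      rcases hu.2.eq_or_lt with h | h
      · rw [h, hγ1, dist_self]
        exact hr
      · have hγu : γ u = Γ (u / (1 - u)) := if_pos h
        rw [hγu]
        refine hN _ ?_ (hΓE _)
        refine Nat.le_floor ?_
        rw [le_div_iff₀ (by linarith)]
        rw [Real.dist_eq, abs_lt, lt_div_iff₀ (by positivity)] at hut
        have h3 : -(1 / ((N : ℝ) + 1)) < u - 1 := hut.1
        have h4 : 1 / ((N : ℝ) + 1) * (N + 1) = 1 := by field_simp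
        have h5 : (0 : ℝ) < N + 1 := by positivity
        nlinarith
    · have hc : ContinuousOn (fun t : ℝ => Γ (t / (1 - t))) (Ico 0 1) := by
        refine hΓc.comp ?_ ?_
        · refine continuousOn_id.div (by fun_prop) fun u hu => ?_
          linarith [hu.2]
        · exact fun u hu => div_nonneg hu.1 (by linarith [hu.2])
      have hc' : ContinuousOn γ (Ico 0 1) := hc.congr fun u hu => if_pos hu.2
      refine (hc' t ⟨ht.1, h⟩).mono_of_mem_nhdsWithin ?_
      exact mem_nhdsWithin.2 ⟨Iio 1, isOpen_Iio, h, fun u hu => ⟨hu.2.1, hu.1⟩⟩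
  refine JoinedIn.ofLine hγc ?_ (if_neg (lt_irrefl _)) ?_
  · have h1 : γ 0 = Γ (0 / (1 - 0)) := if_pos one_pos
    have h2 := hΓeq 0 0 (by simp)
    rw [h1]
    simpa using h2
  · rintro _ ⟨t, ht, rfl⟩
    simp only [hγ]
    split_ifs
    · exact Or.inl (mem_iUnion.2 ⟨_, hΓE _⟩)
    · exact Or.inr rfl

end Concatenation

section Bridges

variable {X : Type*} [MetricSpace X]

/-- `α` restricted to `[0, e]` parametrises a nondegenerate arc. -/
structure IsArcParam (α : ℝ → X) (e : ℝ) : Prop where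
  pos : 0 < e
  cont : ContinuousOn α (Icc 0 e)
  inj : InjOn α (Icc 0 e)

/-- `β` is a bridge of the arc `α` over the open parameter interval `(s, u)`. -/
structure IsBridge (α : ℝ → X) (e s u : ℝ) (β : Set X) : Prop where
  nonneg : 0 ≤ s
  lt : s < u
  le : u ≤ e
  isArc : IsArc β (α s) (α u)
  inter : β ∩ α '' Icc 0 e ⊆ {α s, α u}

/-- There is a bridge inside `V` over the parameter `t` that starts and ends inside an initial
segment of `α` contained in `V`. -/
def HasBridge (α : ℝ → X) (e : ℝ) (V : Set X) (t : ℝ) : Prop :=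
  ∃ s u β, IsBridge α e s u β ∧ s < t ∧ t < u ∧ β ⊆ V ∧ α '' Icc 0 u ⊆ V

variable {α : ℝ → X} {e : ℝ}

lemma IsArcParam.isArc (hα : IsArcParam α e) {s t : ℝ} (hs : 0 ≤ s) (hst : s ≤ t) (ht : t ≤ e) :
    IsArc (α '' Icc s t) (α s) (α t) :=
  isArc_image hα.cont hα.inj hs hst ht

lemma IsArcParam.mem_image_iff (hα : IsArcParam α e) {t : ℝ} {S : Set ℝ} (hS : S ⊆ Icc 0 e)
    (ht : t ∈ Icc 0 e) : α t ∈ α '' S ↔ t ∈ S :=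
  hα.inj.mem_image_iff hS ht

lemma IsBridge.notMem (hα : IsArcParam α e) {s u t : ℝ} {β : Set X} (h : IsBridge α e s u β)
    (ht : t ∈ Icc 0 e) (hts : t ≠ s) (htu : t ≠ u) : α t ∉ β := by
  intro hmem
  rcases h.inter ⟨hmem, mem_image_of_mem α ht⟩ with h' | h'
  · exact hts (hα.inj ht ⟨h.nonneg, h.lt.le.trans h.le⟩ h')
  · exact htu (hα.inj ht ⟨h.nonneg.trans h.lt.le, h.le⟩ h')

lemma IsArcParam.exists_isBridge (hα : IsArcParam α e) {V : Set X} {s₀ t u₀ : ℝ}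
    (hs₀ : 0 ≤ s₀) (hst : s₀ < t) (htu : t < u₀) (hu₀ : u₀ ≤ e)
    (hj : JoinedIn (V \ {α t}) (α s₀) (α u₀)) :
    ∃ s u β, IsBridge α e s u β ∧ s < t ∧ t < u ∧ β ⊆ V := by
  obtain ⟨A, hAV, hA⟩ := hj.exists_isArc
  have ht0 : 0 ≤ t := hs₀.trans hst.le
  have hte : t ≤ e := htu.le.trans hu₀
  have hc1 : IsClosed (α '' Icc 0 t) := (hα.isArc le_rfl ht0 hte).isClosed
  have hc2 : IsClosed (α '' Icc t e) := (hα.isArc ht0 hte le_rfl).isClosed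
  obtain ⟨z, A₁, A₂, h1, h2, h3, -, h5⟩ := hA.symm.exists_first_hit hc1
    ⟨α s₀, hA.left_mem, mem_image_of_mem α ⟨hs₀, hst.le⟩⟩
  obtain ⟨w, B₁, B₂, g1, g2, g3, -, g5⟩ := h1.symm.exists_first_hit hc2
    ⟨α u₀, h1.left_mem, mem_image_of_mem α ⟨htu.le, hu₀⟩⟩
  have hA₁ : A₁ ⊆ V \ {α t} := (subset_union_left.trans h3.le).trans hAV
  have hB₁ : B₁ ⊆ A₁ := subset_union_left.trans g3.le
  obtain ⟨hzA, s, hs, rfl⟩ := h5.ge (mem_singleton z)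
  obtain ⟨hwB, u, hu, rfl⟩ := g5.ge (mem_singleton w)
  have hst' : s < t := hs.2.lt_of_ne fun h => (hA₁ hzA).2 (h ▸ rfl)
  have htu' : t < u := hu.1.lt_of_ne fun h => (hA₁ (hB₁ hwB)).2 (h ▸ rfl)
  refine ⟨s, u, B₁, ⟨hs.1, hst'.trans htu', hu.2, g1, ?_⟩, hst', htu',
    fun v hv => (hA₁ (hB₁ hv)).1⟩
  rintro _ ⟨hvB, v, hv, rfl⟩
  rcases le_total v t with h | h
  · exact Or.inl (h5.le ⟨hB₁ hvB, v, ⟨hv.1, h⟩, rfl⟩)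
  · exact Or.inr (g5.le ⟨hvB, v, ⟨h, hv.2⟩, rfl⟩)

lemma IsArc.isPreconnected {A : Set X} {x y : X} (h : IsArc A x y) : IsPreconnected A := by
  obtain ⟨γ, s, t, -, hc, -, -, -, rfl⟩ := h
  exact isPreconnected_Icc.image γ hc

/-- An arc starting inside a ball and leaving it contains an initial piece that lies in the closed
ball and ends on the sphere. -/
lemma IsArc.exists_hit_sphere {A : Set X} {x y w a : X} {r : ℝ} (h : IsArc A x y)
    (hx : dist x a < r) (hw : w ∈ A) (hwr : r ≤ dist w a) :
    ∃ z A₁, A₁ ⊆ A ∧ IsArc A₁ x z ∧ dist z a = r ∧ A₁ ⊆ closedBall a r := by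
  have hcont : Continuous fun z => dist z a := by fun_prop
  have hcl : IsClosed (sphere a r) := isClosed_sphere
  have key : ∀ {B : Set X} {w : X}, IsArc B x w → r ≤ dist w a → (B ∩ sphere a r).Nonempty := by
    intro B w hB hwr
    obtain ⟨v, hv, hvr⟩ := hB.isPreconnected.intermediate_value hB.left_mem hB.right_mem
      hcont.continuousOn ⟨hx.le, hwr⟩
    exact ⟨v, hv, hvr⟩
  have hne : (A ∩ sphere a r).Nonempty := by
    obtain ⟨A₁, A₂, h1, -, h3, -⟩ := h.exists_split hw
    exact (key h1 hwr).mono (inter_subset_inter_left _ (subset_union_left.trans h3.le))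
  obtain ⟨z, A₁, A₂, h1, -, h3, -, h5⟩ := h.exists_first_hit hcl hne
  have hz : dist z a = r := (h5.ge (mem_singleton z)).2
  refine ⟨z, A₁, subset_union_left.trans h3.le, h1, hz, fun v hv => ?_⟩
  by_contra hvr
  rw [mem_closedBall, not_le] at hvr
  obtain ⟨B₁, B₂, g1, g2, g3, g4⟩ := h1.exists_split hv
  obtain ⟨q, hqB, hq⟩ := key g1 hvr.le
  have hqz : q = z := h5.le ⟨g3.le (Or.inl hqB), hq⟩
  have : z = v := g4.le ⟨hqz ▸ hqB, g2.right_mem⟩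
  rw [this] at hz
  exact hvr.ne' hz

/-- An open neighbourhood of the starting point of `α` containing only points of an initial segment
of `α` inside `V`. -/
lemma IsArcParam.exists_isOpen_initial (hα : IsArcParam α e) {V : Set X} (hV : IsOpen V)
    (haV : α 0 ∈ V) : ∃ W ⊆ V, IsOpen W ∧ α 0 ∈ W ∧
      ∀ u ∈ Icc 0 e, α u ∈ W → α '' Icc 0 u ⊆ V := by
  obtain ⟨η, hη, hηV⟩ : ∃ η > 0, ∀ u ∈ Icc 0 e, u < η → α u ∈ V := by
    have := hα.cont 0 ⟨le_rfl, hα.pos.le⟩ (hV.mem_nhds haV)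
    obtain ⟨η, hη, h⟩ := Metric.mem_nhdsWithin_iff.1 this
    refine ⟨η, hη, fun u hu huη => h ⟨?_, hu⟩⟩
    rw [mem_ball, Real.dist_eq, sub_zero, abs_of_nonneg hu.1]
    exact huη
  have hcl : IsClosed (α '' Icc η e) :=
    (isCompact_Icc.image_of_continuousOn (hα.cont.mono (Icc_subset_Icc_left hη.le))).isClosed
  refine ⟨V \ α '' Icc η e, sdiff_subset, hV.sdiff hcl, ⟨haV, ?_⟩, ?_⟩
  · rw [hα.mem_image_iff (Icc_subset_Icc_left hη.le) ⟨le_rfl, hα.pos.le⟩]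
    exact fun h => absurd h.1 (not_le.2 hη)
  · rintro u hu ⟨-, huη⟩ _ ⟨v, hv, rfl⟩
    rw [hα.mem_image_iff (Icc_subset_Icc_left hη.le) hu] at huη
    have : u < η := not_le.1 fun h => huη ⟨h, hu.2⟩
    exact hηV v ⟨hv.1, hv.2.trans hu.2⟩ (hv.2.trans_lt this)

/-- If every interior parameter is bridged but no bridge starts at the initial point, then there
are arbitrarily small bridges near the initial point. -/
lemma IsArcParam.exists_hasBridge_of_forall_pos [CompactSpace X] [LocallyPathConnectedSpace X]
    (hα : IsArcParam α e)
    (hbr : ∀ t, 0 < t → t < e → ∃ s u β, IsBridge α e s u β ∧ s < t ∧ t < u)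
    (hno : ∀ s u β, IsBridge α e s u β → 0 < s) {V : Set X} (hV : IsOpen V) (haV : α 0 ∈ V) :
    ∃ τ > 0, ∀ t, 0 < t → t < τ → HasBridge α e V t := by
  obtain ⟨W, hWV, hW, haW, hWα⟩ := hα.exists_isOpen_initial hV haV
  by_contra! hcon
  have hstep : ∀ τ : ℝ, ∃ t s u : ℝ, ∃ β : Set X, 0 < τ → 0 < s ∧ s < t ∧ t < u ∧ t < τ ∧ t < e ∧
      IsBridge α e s u β ∧ ¬ HasBridge α e V t := by
    intro τ
    by_cases hτ : 0 < τ
    · obtain ⟨t, ht0, ht, hnb⟩ := hcon (min τ e) (lt_min hτ hα.pos)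
      obtain ⟨s, u, β, hβ, hst, htu⟩ := hbr t ht0 (ht.trans_le (min_le_right _ _))
      exact ⟨t, s, u, β, fun _ => ⟨hno s u β hβ, hst, htu, ht.trans_le (min_le_left _ _),
        ht.trans_le (min_le_right _ _), hβ, hnb⟩⟩
    · exact ⟨0, 0, 0, ∅, fun h => absurd h hτ⟩
  choose tt ss uu bb H using hstep
  obtain ⟨τ, hτ0, hτs⟩ : ∃ τ : ℕ → ℝ, τ 0 = 1 ∧ ∀ n, τ (n + 1) = min (ss (τ n)) (1 / (n + 1)) :=
    ⟨fun n => Nat.rec 1 (fun n x => min (ss x) (1 / (n + 1))) n, rfl, fun n => rfl⟩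
  have hτpos : ∀ n, 0 < τ n := by
    intro n
    induction n with
    | zero => rw [hτ0]; exact one_pos
    | succ n ih => rw [hτs]; exact lt_min (H _ ih).1 (by positivity)
  set s : ℕ → ℝ := fun n => ss (τ n) with hs
  set t : ℕ → ℝ := fun n => tt (τ n) with ht
  set u : ℕ → ℝ := fun n => uu (τ n) with hu
  set β : ℕ → Set X := fun n => bb (τ n) with hβ
  have hs0 : ∀ n, 0 < s n := fun n => (H _ (hτpos n)).1
  have hst : ∀ n, s n < t n := fun n => (H _ (hτpos n)).2.1
  have htu : ∀ n, t n < u n := fun n => (H _ (hτpos n)).2.2.1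
  have htτ : ∀ n, t n < τ n := fun n => (H _ (hτpos n)).2.2.2.1
  have hte : ∀ n, t n < e := fun n => (H _ (hτpos n)).2.2.2.2.1
  have hB : ∀ n, IsBridge α e (s n) (u n) (β n) := fun n => (H _ (hτpos n)).2.2.2.2.2.1
  have hnb : ∀ n, ¬ HasBridge α e V (t n) := fun n => (H _ (hτpos n)).2.2.2.2.2.2
  have hτs1 : ∀ n, τ (n + 1) ≤ s n := fun n => by rw [hτs]; exact min_le_left _ _
  have hτs2 : ∀ n : ℕ, τ (n + 1) ≤ 1 / (n + 1) := fun n => by rw [hτs]; exact min_le_right _ _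
  have hτanti : Antitone τ := antitone_nat_of_succ_le fun n =>
    (hτs1 n).trans ((hst n).le.trans (htτ n).le)
  have hts : ∀ n m, n < m → t m < s n := fun n m hnm =>
    (htτ m).trans_le ((hτanti (Nat.succ_le_of_lt hnm)).trans (hτs1 n))
  have hτlim : Tendsto τ atTop (𝓝 0) := by
    rw [← tendsto_add_atTop_iff_nat 1]
    exact squeeze_zero (fun n => (hτpos _).le) hτs2 tendsto_one_div_add_atTop_nhds_zero_nat
  have htlim : Tendsto t atTop (𝓝 0) :=
    squeeze_zero (fun n => ((hs0 n).trans (hst n)).le) (fun n => (htτ n).le) hτlim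
  have hslim : Tendsto s atTop (𝓝 0) :=
    squeeze_zero (fun n => (hs0 n).le) (fun n => (hst n).le) htlim
  obtain ⟨r, hr, hrW⟩ := Metric.nhds_basis_closedBall.mem_iff.1 (hW.mem_nhds haW)
  have hαlim : Tendsto (fun n => α (s n)) atTop (𝓝 (α 0)) := by
    refine (hα.cont 0 ⟨le_rfl, hα.pos.le⟩).tendsto.comp ?_
    refine tendsto_nhdsWithin_iff.2 ⟨hslim, Eventually.of_forall fun n => ?_⟩
    exact ⟨(hs0 n).le, ((hst n).trans (hte n)).le⟩
  obtain ⟨N, hN⟩ := eventually_atTop.1 (hαlim.eventually (ball_mem_nhds (α 0) hr))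
  have hpt : ∀ n, ∃ y A, N ≤ n →
      A ⊆ β n ∧ IsArc A (α (s n)) y ∧ dist y (α 0) = r ∧ A ⊆ closedBall (α 0) r := by
    intro n
    by_cases hn : N ≤ n
    · obtain ⟨w, hw, hwr⟩ : ∃ w ∈ β n, r ≤ dist w (α 0) := by
        by_contra! hcon
        have hsub : β n ⊆ W := fun w hw => hrW (hcon w hw).le
        refine hnb n ⟨s n, u n, β n, hB n, hst n, htu n, hsub.trans hWV, ?_⟩
        exact hWα _ ⟨(hB n).nonneg.trans (hB n).lt.le, (hB n).le⟩ (hsub (hB n).isArc.right_mem)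
      obtain ⟨z, A, h⟩ := (hB n).isArc.exists_hit_sphere (hN n hn) hw hwr
      exact ⟨z, A, fun _ => h⟩
    · exact ⟨α 0, ∅, fun h => absurd h hn⟩
  choose y A hyA using hpt
  obtain ⟨y₀, φ, hφ, hlim⟩ := CompactSpace.tendsto_subseq y
  have hy₀ : dist y₀ (α 0) = r := by
    refine tendsto_nhds_unique (hlim.dist tendsto_const_nhds) ?_
    refine tendsto_const_nhds.congr' ?_
    filter_upwards [eventually_ge_atTop N] with n hn
    exact (hyA _ (hn.trans (hφ.id_le n))).2.2.1.symm
  obtain ⟨ρ, hρ0, hρe, hρ⟩ : ∃ ρ > 0, ρ ≤ e ∧ y₀ ∉ α '' Icc 0 ρ := by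
    have hne : α 0 ∈ ({y₀}ᶜ : Set X) := fun h => by
      rw [mem_singleton_iff.1 h, dist_self] at hy₀
      exact hr.ne hy₀
    have := hα.cont 0 ⟨le_rfl, hα.pos.le⟩ (isOpen_compl_singleton.mem_nhds hne)
    obtain ⟨η, hη, h⟩ := Metric.mem_nhdsWithin_iff.1 this
    refine ⟨min (η / 2) e, lt_min (by positivity) hα.pos, min_le_right _ _, ?_⟩
    rintro ⟨v, hv, hvy⟩
    refine h ⟨?_, hv.1, hv.2.trans (min_le_right _ _)⟩ hvy
    rw [mem_ball, Real.dist_eq, sub_zero, abs_of_nonneg hv.1]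
    linarith [hv.2, min_le_left (η / 2) e]
  have hU : IsOpen (W \ α '' Icc 0 ρ) := hW.sdiff (hα.isArc le_rfl hρ0.le hρe).isClosed
  have hyU : y₀ ∈ W \ α '' Icc 0 ρ := ⟨hrW hy₀.le, hρ⟩
  have hO : IsOpen (pathComponentIn (W \ α '' Icc 0 ρ) y₀) := hU.pathComponentIn y₀
  have hev1 := hlim.eventually (hO.mem_nhds (mem_pathComponentIn_self hyU))
  have hev2 := (htlim.comp hφ.tendsto_atTop).eventually (Iio_mem_nhds hρ0)
  obtain ⟨M, hM⟩ := eventually_atTop.1 ((hev1.and hev2).and (eventually_ge_atTop N))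
  have hφN : ∀ k, M ≤ k → N ≤ φ k := fun k hk => (hM k hk).2.trans (hφ.id_le k)
  set n := φ M with hn
  set m := φ (M + 1) with hm
  have hnm : n < m := hφ (Nat.lt_succ_self M)
  obtain ⟨hn1, hn2, -, hn4⟩ := hyA n (hφN M le_rfl)
  obtain ⟨hm1, hm2, -, hm4⟩ := hyA m (hφN (M + 1) (Nat.le_succ M))
  have htm := hts n m hnm
  have htmI : t m ∈ Icc 0 e := ⟨((hs0 m).trans (hst m)).le, (hte m).le⟩
  have hjm : JoinedIn (W \ {α (t m)}) (α (s m)) (y m) := by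
    refine hm2.joinedIn.mono fun v hv => ⟨hrW (hm4 hv), ?_⟩
    rintro rfl
    exact (hB m).notMem hα htmI (hst m).ne' (htu m).ne (hm1 hv)
  have hjn : JoinedIn (W \ {α (t m)}) (α (s n)) (y n) := by
    refine hn2.joinedIn.mono fun v hv => ⟨hrW (hn4 hv), ?_⟩
    rintro rfl
    exact (hB n).notMem hα htmI htm.ne (htm.trans ((hst n).trans (htu n))).ne (hn1 hv)
  have hjU : ∀ k, M ≤ k → JoinedIn (W \ {α (t m)}) y₀ (y (φ k)) := by
    intro k hk
    refine JoinedIn.mono (hM k hk).1.1 fun v hv => ⟨hv.1, ?_⟩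
    rintro rfl
    exact hv.2 (mem_image_of_mem α ⟨htmI.1, (hM (M + 1) (Nat.le_succ M)).1.2.le⟩)
  have hj := ((hjm.trans (hjU (M + 1) (Nat.le_succ M)).symm).trans (hjU M le_rfl)).trans hjn.symm
  obtain ⟨s', u', β', hβ', hs', hu', hsub⟩ := hα.exists_isBridge (hs0 m).le (hst m) htm
    ((hst n).trans (hte n)).le hj
  refine hnb m ⟨s', u', β', hβ', hs', hu', hsub.trans hWV, ?_⟩
  exact hWα _ ⟨hβ'.nonneg.trans hβ'.lt.le, hβ'.le⟩ (hsub hβ'.isArc.right_mem)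

end Bridges

section Descent

variable {X : Type*} [MetricSpace X]

/-- `L` is an arc from `p` to `w` that runs inside `T` first and inside `V` afterwards. -/
def IsTwoPart (T V : Set X) (p w : X) (L : Set X) : Prop :=
  ∃ y A M, IsArc A p y ∧ IsArc M y w ∧ A ∩ M ⊆ {y} ∧ A ∪ M = L ∧ A ⊆ T ∧ M ⊆ V

variable {T V L E : Set X} {p w w' y : X}

lemma IsTwoPart.isArc (h : IsTwoPart T V p w L) : IsArc L p w := by
  obtain ⟨y, A, M, hA, hM, hAM, rfl, -, -⟩ := h
  exact hA.trans hM hAM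

lemma IsTwoPart.extend (h : IsTwoPart T V p w L) (hE : IsArc E w w') (hEV : E ⊆ V)
    (hEL : L ∩ E ⊆ {w}) : IsTwoPart T V p w' (L ∪ E) := by
  obtain ⟨y, A, M, hA, hM, hAM, rfl, hAT, hMV⟩ := h
  refine ⟨y, A, M ∪ E, hA, hM.trans hE ?_, ?_, (union_assoc _ _ _).symm, hAT,
    union_subset hMV hEV⟩
  · exact (inter_subset_inter_left _ subset_union_right).trans hEL
  · rintro z ⟨hzA, hzM | hzE⟩
    · exact hAM ⟨hzA, hzM⟩
    · have : z = w := hEL ⟨Or.inl hzA, hzE⟩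
      exact hAM ⟨hzA, this ▸ hM.right_mem⟩

lemma IsTwoPart.exists_cut (h : IsTwoPart T V p w L) (hy : y ∈ L) (hyV : y ∈ V) (hyw : y ≠ w) :
    ∃ L' ⊆ L, IsTwoPart T V p y L' ∧ w ∉ L' := by
  obtain ⟨j, A, M, hA, hM, hAM, rfl, hAT, hMV⟩ := h
  have hAw : w ∈ A → w = j := fun hw => hAM ⟨hw, hM.right_mem⟩
  by_cases hyM : y ∈ M
  · obtain ⟨M₁, M₂, h1, h2, rfl, h4⟩ := hM.exists_split hyM
    have hwM : w ∉ M₁ := fun hw => hyw (h4.le ⟨hw, h2.right_mem⟩ : w = y).symm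
    refine ⟨A ∪ M₁, union_subset_union_right _ subset_union_left,
      ⟨j, A, M₁, hA, h1, ?_, rfl, hAT, subset_union_left.trans hMV⟩, ?_⟩
    · exact (inter_subset_inter_right _ subset_union_left).trans hAM
    · rintro (hw | hw)
      · exact hwM (hAw hw ▸ h1.left_mem)
      · exact hwM hw
  · have hyA : y ∈ A := hy.resolve_right hyM
    obtain ⟨A₁, A₂, h1, h2, rfl, h4⟩ := hA.exists_split hyA
    refine ⟨A₁, subset_union_left.trans subset_union_left,
      ⟨y, A₁, {y}, h1, isArc_singleton y, inter_subset_right, ?_, subset_union_left.trans hAT,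
        singleton_subset_iff.2 hyV⟩, fun hw => ?_⟩
    · exact union_eq_self_of_subset_right (singleton_subset_iff.2 h1.right_mem)
    · have hwj := hAw (Or.inl hw)
      have : w = y := h4.le ⟨hw, hwj ▸ h2.right_mem⟩
      exact hyw this.symm

/-- Two arcs `L`, `N` that end at the point `α s`, meet at most at `α s` and `b`, avoid the part of
`α` before `s` and contain the part of `α` directly after `s`. -/
structure IsFork (α : ℝ → X) (e : ℝ) (b p q : X) (L₀ N₀ V : Set X) (s : ℝ) (L N : Set X) :
    Prop where
  nonneg : 0 ≤ s
  left : IsTwoPart L₀ V p (α s) L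
  right : IsTwoPart N₀ V q (α s) N
  inter : L ∩ N ⊆ {α s, b}
  disj : Disjoint (L ∪ N) (α '' Ico 0 s)
  seg : ∃ ε > 0, s + ε ≤ e ∧ α '' Icc s (s + ε) ⊆ L ∪ N

variable {α : ℝ → X} {e s : ℝ} {b q : X} {L₀ N₀ N : Set X}

lemma IsFork.symm (h : IsFork α e b p q L₀ N₀ V s L N) : IsFork α e b q p N₀ L₀ V s N L where
  nonneg := h.nonneg
  left := h.right
  right := h.left
  inter := by rw [inter_comm]; exact h.inter
  disj := by rw [union_comm]; exact h.disj
  seg := by rw [union_comm]; exact h.seg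

lemma IsFork.exists_lt_of_first_hit (hα : IsArcParam α e) (h : IsFork α e b p q L₀ N₀ V s L N)
    {s' u ε : ℝ} {β R : Set X} (hβ : IsBridge α e s' u β) (hs : s' < s) (hε : 0 < ε)
    (hsu : s + ε ≤ u) (hV : α '' Icc 0 u ⊆ V) (hR : IsArc R (α s') y)
    (hRV : R ⊆ V) (hRβ : R ⊆ β ∪ α '' Icc (s + ε) u) (hRLN : R ∩ (L ∪ N) = {y}) (hyL : y ∈ L) :
    ∃ L' N', IsFork α e b p q L₀ N₀ V s' L' N' := by
  have hue := hβ.le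
  have hs'0 := hβ.nonneg
  have hsI : s ∈ Icc 0 e := ⟨h.nonneg, by linarith⟩
  have hαR : ∀ t ∈ Icc 0 s, t ≠ s' → α t ∉ R := by
    intro t ht hts htR
    have htI : t ∈ Icc 0 e := ⟨ht.1, ht.2.trans hsI.2⟩
    rcases hRβ htR with h' | h'
    · exact hβ.notMem hα htI hts (by linarith [ht.2]) h'
    · rw [hα.mem_image_iff (Icc_subset_Icc (by linarith [h.nonneg]) hue) htI] at h'
      linarith [ht.2, h'.1]
  have hys : y ≠ α s := fun hy => hαR s ⟨h.nonneg, le_rfl⟩ hs.ne' (hy ▸ hR.right_mem)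
  have hαLN : ∀ t ∈ Ico 0 s, α t ∉ L ∪ N := fun t ht htm =>
    disjoint_left.1 h.disj htm (mem_image_of_mem α ht)
  obtain ⟨L₁, hL₁, hL₁', hsL₁⟩ := h.left.exists_cut hyL (hRV hR.right_mem) hys
  have hseg : IsArc (α '' Icc s' s) (α s) (α s') := (hα.isArc hs'0 hs.le hsI.2).symm
  have hRL : ∀ z ∈ R, z ∈ L ∪ N → z = y := fun z hz hz' => hRLN.le ⟨hz, hz'⟩
  refine ⟨L₁ ∪ R, N ∪ α '' Icc s' s, hs'0, hL₁'.extend hR.symm hRV ?_,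
    h.right.extend hseg ?_ ?_, ?_, ?_, s - s', by linarith, by linarith [hsI.2], ?_⟩
  · rintro z ⟨hzL, hzR⟩
    exact hRL z hzR (Or.inl (hL₁ hzL))
  · exact (image_mono (Icc_subset_Icc hs'0 (by linarith))).trans hV
  · rintro _ ⟨hzN, t, ht, rfl⟩
    rcases ht.2.eq_or_lt with h' | h'
    · rw [h']; rfl
    · exact absurd (Or.inr hzN) (hαLN t ⟨hs'0.trans ht.1, h'⟩)
  · rintro z ⟨hzL | hzR, hzN | ⟨t, ht, rfl⟩⟩
    · rcases h.inter ⟨hL₁ hzL, hzN⟩ with h' | h'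
      · exact absurd (h' ▸ hzL) hsL₁
      · exact Or.inr h'
    · rcases ht.2.eq_or_lt with h' | h'
      · exact absurd (h' ▸ hzL) hsL₁
      · exact absurd (Or.inl (hL₁ hzL)) (hαLN t ⟨hs'0.trans ht.1, h'⟩)
    · have hzy := hRL z hzR (Or.inr hzN)
      subst hzy
      rcases h.inter ⟨hyL, hzN⟩ with h' | h'
      · exact absurd h' hys
      · exact Or.inr h'
    · by_cases h' : t = s'
      · rw [h']; exact Or.inl rfl
      · exact absurd hzR (hαR t ⟨hs'0.trans ht.1, ht.2⟩ h')
  · rw [disjoint_right]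
    rintro _ ⟨t, ht, rfl⟩
    have hts : t ∈ Ico 0 s := ⟨ht.1, ht.2.trans hs⟩
    rintro ((hz | hz) | (hz | hz))
    · exact hαLN t hts (Or.inl (hL₁ hz))
    · exact hαR t ⟨ht.1, hts.2.le⟩ ht.2.ne hz
    · exact hαLN t hts (Or.inr hz)
    · rw [hα.mem_image_iff (Icc_subset_Icc hs'0 hsI.2) ⟨ht.1, hts.2.le.trans hsI.2⟩] at hz
      exact absurd hz.1 (not_le.2 ht.2)
  · rw [add_sub_cancel]
    exact subset_union_right.trans subset_union_right

lemma IsFork.exists_lt (hα : IsArcParam α e) (h : IsFork α e b p q L₀ N₀ V s L N)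
    {s' u : ℝ} {β : Set X} (hβ : IsBridge α e s' u β) (hs : s' < s) (hsu : s < u) (hβV : β ⊆ V)
    (hV : α '' Icc 0 u ⊆ V) : ∃ L' N', IsFork α e b p q L₀ N₀ V s' L' N' := by
  obtain ⟨ε₀, hε₀, hse₀, hseg₀⟩ := h.seg
  set ε := min ε₀ (u - s) with hεdef
  have hε : 0 < ε := lt_min hε₀ (by linarith)
  have hsu' : s + ε ≤ u := by linarith [min_le_right ε₀ (u - s)]
  have hεm : α (s + ε) ∈ L ∪ N :=
    hseg₀ (mem_image_of_mem α ⟨by linarith, by linarith [min_le_left ε₀ (u - s)]⟩)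
  have hs0 : 0 ≤ s + ε := by linarith [h.nonneg]
  have hue := hβ.le
  have hR₀ : IsArc (β ∪ α '' Icc (s + ε) u) (α s') (α (s + ε)) := by
    refine hβ.isArc.trans (hα.isArc hs0 hsu' hβ.le).symm ?_
    rintro _ ⟨hz, t, ht, rfl⟩
    by_contra htu
    refine hβ.notMem hα ⟨hs0.trans ht.1, ht.2.trans hβ.le⟩ ?_ ?_ hz
    · intro h'
      linarith [ht.1]
    · rintro rfl
      exact htu rfl
  have hcl : IsClosed (L ∪ N) := h.left.isArc.isClosed.union h.right.isArc.isClosed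
  obtain ⟨y, R, R', h1, -, h3, -, h5⟩ := hR₀.exists_first_hit hcl ⟨_, hR₀.right_mem, hεm⟩
  have hRβ : R ⊆ β ∪ α '' Icc (s + ε) u := subset_union_left.trans h3.le
  have hRV : R ⊆ V := hRβ.trans
    (union_subset hβV ((image_mono (Icc_subset_Icc_left hs0)).trans hV))
  rcases (h5.ge (mem_singleton y)).2 with hy | hy
  · exact h.exists_lt_of_first_hit hα hβ hs hε hsu' hV h1 hRV hRβ h5 hy
  · rw [union_comm] at h5
    obtain ⟨L', N', h'⟩ := h.symm.exists_lt_of_first_hit hα hβ hs hε hsu' hV h1 hRV hRβ h5 hy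
    exact ⟨N', L', h'.symm⟩

/-- A fork can be moved arbitrarily close to the initial point of `α` along bridges. -/
lemma IsFork.exists_lt_eps (hα : IsArcParam α e) {s₀ : ℝ}
    (h : IsFork α e b p q L₀ N₀ V s₀ L N) (hbr : ∀ t, 0 < t → t ≤ s₀ → HasBridge α e V t)
    {ε : ℝ} (hε : 0 < ε) :
    ∃ s L' N', s < ε ∧ (s = s₀ ∨ ∃ u β, IsBridge α e s u β) ∧
      IsFork α e b p q L₀ N₀ V s L' N' := by
  set S := {s | (s = s₀ ∨ ∃ u β, IsBridge α e s u β) ∧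
    ∃ L' N', IsFork α e b p q L₀ N₀ V s L' N'} with hS
  have hne : S.Nonempty := ⟨s₀, Or.inl rfl, L, N, h⟩
  have hbdd : BddBelow S := ⟨0, by rintro s ⟨-, L', N', h'⟩; exact h'.nonneg⟩
  by_cases hσ : sInf S < ε
  · obtain ⟨s, ⟨hs, L', N', h'⟩, hsε⟩ := exists_lt_of_csInf_lt hne hσ
    exact ⟨s, L', N', hsε, hs, h'⟩
  · have hσ0 : 0 < sInf S := hε.trans_le (not_lt.1 hσ)
    obtain ⟨s', u, β, hβ, hs', hu, hβV, hV⟩ :=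
      hbr _ hσ0 (csInf_le hbdd ⟨Or.inl rfl, L, N, h⟩)
    obtain ⟨s, ⟨hs, L', N', h'⟩, hsu⟩ := exists_lt_of_csInf_lt hne hu
    have hs's : s' < s := hs'.trans_le (csInf_le hbdd ⟨hs, L', N', h'⟩)
    obtain ⟨L'', N'', h''⟩ := h'.exists_lt hα hβ hs's hsu hβV hV
    exact absurd (csInf_le hbdd ⟨Or.inr ⟨u, β, hβ⟩, L'', N'', h''⟩) (not_le.2 hs')

end Descent

section TwoCurves

variable {X : Type} [MetricSpace X] {J O D : Set X} {a b u v : X}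

/-- No single point separates `a` from `b`. -/
def IsConjugate (a b : X) : Prop :=
  ∀ z, z ≠ a → z ≠ b → JoinedIn {z}ᶜ a b

lemma IsConjugate.symm (h : IsConjugate a b) : IsConjugate b a :=
  fun z hb ha => (h z ha hb).symm

/-- Replacing a part of a Jordan curve by an ear. -/
lemma IsJordanCurve.exists_of_ear (hJ : IsJordanCurve J) (hD : IsArc D u v) (huv : u ≠ v)
    (hu : u ∈ J) (hv : v ∈ J) (hDJ : D ∩ J ⊆ {u, v}) (ha : a ∈ D) (hb : b ∈ J) :
    ∃ J', IsJordanCurve J' ∧ a ∈ J' ∧ b ∈ J' := by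
  obtain ⟨P, hPJ, hP, hbP⟩ := hJ.exists_isArc_through hu hv huv hb
  exact ⟨D ∪ P, hD.isJordanCurve_union hP huv ((inter_subset_inter_right _ hPJ).trans hDJ),
    Or.inl ha, Or.inr hbP⟩

lemma IsJordanCurve.exists_of_ne_mem_inter (hJ : IsJordanCurve J) (hO : IsJordanCurve O)
    (ha : a ∈ O) (hb : b ∈ J) (huv : u ≠ v) (hu : u ∈ J ∩ O) (hv : v ∈ J ∩ O) :
    ∃ J', IsJordanCurve J' ∧ a ∈ J' ∧ b ∈ J' := by
  by_cases haJ : a ∈ J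
  · exact ⟨J, hJ, haJ, hb⟩
  obtain ⟨P, hPO, hP, haP⟩ := hO.exists_isArc_through hu.2 hv.2 huv ha
  obtain ⟨P₁, P₂, h1, h2, h3, h4⟩ := hP.exists_split haP
  obtain ⟨u', A₁, B₁, k1, -, k3, -, k5⟩ := h1.symm.exists_first_hit hJ.isClosed
    ⟨u, h1.left_mem, hu.1⟩
  obtain ⟨v', A₂, B₂, l1, -, l3, -, l5⟩ := h2.exists_first_hit hJ.isClosed
    ⟨v, h2.right_mem, hv.1⟩
  have hA₁ : A₁ ⊆ P₁ := subset_union_left.trans k3.le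
  have hA₂ : A₂ ⊆ P₂ := subset_union_left.trans l3.le
  have hu' : u' ∈ J := (k5.ge (mem_singleton _)).2
  have hv' : v' ∈ J := (l5.ge (mem_singleton _)).2
  refine hJ.exists_of_ear (D := A₁ ∪ A₂) (k1.symm.trans l1 ?_) ?_ hu' hv' ?_
    (Or.inl k1.left_mem) hb
  · exact (inter_subset_inter hA₁ hA₂).trans h4.le
  · rintro rfl
    have : u' = a := h4.le ⟨hA₁ k1.right_mem, hA₂ l1.right_mem⟩
    exact haJ (this ▸ hu')
  · rintro z ⟨hz | hz, hzJ⟩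
    · exact Or.inl (k5.le ⟨hz, hzJ⟩)
    · exact Or.inr (l5.le ⟨hz, hzJ⟩)

/-- Conjugate points on two intersecting Jordan curves lie on a common Jordan curve. -/
lemma IsConjugate.exists_of_inter (h : IsConjugate a b) (hJ : IsJordanCurve J)
    (hO : IsJordanCurve O) (ha : a ∈ O) (hb : b ∈ J) (hJO : (J ∩ O).Nonempty) :
    ∃ J', IsJordanCurve J' ∧ a ∈ J' ∧ b ∈ J' := by
  by_cases haJ : a ∈ J
  · exact ⟨J, hJ, haJ, hb⟩
  by_cases hbO : b ∈ O
  · exact ⟨O, hO, ha, hbO⟩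
  obtain ⟨w, hw⟩ := hJO
  by_cases hsub : ∃ v ∈ J ∩ O, w ≠ v
  · obtain ⟨v, hv, hwv⟩ := hsub
    exact hJ.exists_of_ne_mem_inter hO ha hb hwv hw hv
  push Not at hsub
  have hwa : w ≠ a := fun h => haJ (h ▸ hw.1)
  have hwb : w ≠ b := fun h => hbO (h ▸ hw.2)
  obtain ⟨A, hAw, hA⟩ := (h w hwa hwb).exists_isArc
  obtain ⟨x, A₁, B₁, k1, -, k3, -, k5⟩ := hA.symm.exists_first_hit hO.isClosed
    ⟨a, hA.left_mem, ha⟩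
  obtain ⟨y, A₂, B₂, l1, -, l3, -, l5⟩ := k1.symm.exists_first_hit hJ.isClosed
    ⟨b, k1.left_mem, hb⟩
  have hA₁ : A₁ ⊆ A := subset_union_left.trans k3.le
  have hA₂ : A₂ ⊆ A₁ := subset_union_left.trans l3.le
  have hwA : w ∉ A₂ := fun hw => hAw (hA₁ (hA₂ hw)) rfl
  have hx : x ∈ O := (k5.ge (mem_singleton _)).2
  have hy : y ∈ J := (l5.ge (mem_singleton _)).2
  have hxw : x ≠ w := fun h => hwA (h ▸ l1.left_mem)
  have hyw : y ≠ w := fun h => hwA (h ▸ l1.right_mem)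
  have hxy : x ≠ y := fun h => hxw (hsub x ⟨h ▸ hy, hx⟩).symm
  obtain ⟨P, hPJ, hP, hbP⟩ := hJ.exists_isArc_through hw.1 hy hyw.symm hb
  obtain ⟨Q, hQO, hQ, haQ⟩ := hO.exists_isArc_through hx hw.2 hxw ha
  have hQP : IsArc (Q ∪ P) x y := hQ.trans hP fun z hz => (hsub z ⟨hPJ hz.2, hQO hz.1⟩).symm
  refine ⟨A₂ ∪ (Q ∪ P), l1.isJordanCurve_union hQP hxy ?_, Or.inr (Or.inl haQ),
    Or.inr (Or.inr hbP)⟩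
  rintro z ⟨hz, hz' | hz'⟩
  · exact Or.inl (k5.le ⟨hA₂ hz, hQO hz'⟩)
  · exact Or.inr (l5.le ⟨hz, hPJ hz'⟩)

end TwoCurves

section Phases

variable {X : Type} [MetricSpace X] {α : ℝ → X} {e s : ℝ} {b p q : X} {V L N : Set X}

lemma IsTwoPart.of_isArc (h : IsArc L p q) (hq : q ∈ V) : IsTwoPart L V p q L :=
  ⟨q, L, {q}, h, isArc_singleton q, inter_subset_right,
    union_eq_self_of_subset_right (singleton_subset_iff.2 h.right_mem), Subset.rfl,
    singleton_subset_iff.2 hq⟩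

/-- Cutting a two-part arc where it first enters the open set `W`. -/
lemma IsTwoPart.exists_first_entry {T W : Set X} (h : IsTwoPart T V p q L) (hW : IsOpen W)
    (hTW : Disjoint T W) :
    ∃ y C D, IsArc C p y ∧ IsArc D y q ∧ C ∪ D = L ∧ C ⊆ T ∪ V ∧ D ⊆ V ∧ Disjoint C W := by
  obtain ⟨j, A, M, hA, hM, hAM, rfl, hAT, hMV⟩ := h
  have hj : j ∉ W := disjoint_left.1 hTW (hAT hA.right_mem)
  obtain ⟨z, M₁, M₂, h1, h2, rfl, h4, h5⟩ := hM.exists_first_entry hW hj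
  refine ⟨z, A ∪ M₁, M₂, hA.trans h1 ?_, h2, union_assoc _ _ _, ?_, ?_, ?_⟩
  · exact (inter_subset_inter_right _ subset_union_left).trans hAM
  · exact union_subset_union hAT (subset_union_left.trans hMV)
  · exact subset_union_right.trans hMV
  · exact disjoint_union_left.2 ⟨hTW.mono_left hAT, disjoint_iff_inter_eq_empty.2 h5⟩

/-- The data of a stage in the construction of two arcs from `b` to `α 0`: the parts `P`, `Q`
already fixed, their end points `p`, `q`, and the provisional continuations `L`, `N` to `α s`. -/
structure Stage (X : Type) where
  (P Q L N V : Set X)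
  (p q : X)
  (s : ℝ)

/-- The invariants of the construction: the fixed parts meet the rest and each other at most at `b`,
and the construction can be continued inside the neighbourhood `V` of `α 0`. -/
structure Stage.IsGood (α : ℝ → X) (e : ℝ) (b : X) (D : Stage X) : Prop where
  pos : 0 < D.s
  isOpen : IsOpen D.V
  mem : α 0 ∈ D.V
  left : IsArc D.L D.p (α D.s)
  right : IsArc D.N D.q (α D.s)
  hasBridge : ∀ t, 0 < t → t ≤ D.s → HasBridge α e D.V t
  P_inter_Q : D.P ∩ D.Q ⊆ {b}
  P_inter_N : D.P ∩ D.N ⊆ {b}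
  Q_inter_L : D.Q ∩ D.L ⊆ {b}
  P_inter_V : D.P ∩ D.V ⊆ {b}
  Q_inter_V : D.Q ∩ D.V ⊆ {b}
  L_inter_N : D.L ∩ D.N ⊆ {α D.s, b}
  disj : Disjoint (D.L ∪ D.N) (α '' Ico 0 D.s)
  seg : ∃ ε > 0, D.s + ε ≤ e ∧ α '' Icc D.s (D.s + ε) ⊆ D.L ∪ D.N

/-- The stage `D'` extends the stage `D` and continues inside the ball of radius `r`. -/
structure Stage.Extends (a : X) (r : ℝ) (D D' : Stage X) : Prop where
  V_subset : D'.V ⊆ ball a r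
  V_anti : D'.V ⊆ D.V
  L_subset : D'.L ⊆ D.V
  N_subset : D'.N ⊆ D.V
  left : ∃ E, IsArc E D.p D'.p ∧ D'.P = D.P ∪ E ∧ E ⊆ D.L ∪ D.V
  right : ∃ F, IsArc F D.q D'.q ∧ D'.Q = D.Q ∪ F ∧ F ⊆ D.N ∪ D.V

lemma Stage.IsGood.exists_extends [CompactSpace X] [LocallyPathConnectedSpace X]
    (hα : IsArcParam α e)
    (hbr : ∀ t, 0 < t → t < e → ∃ s u β, IsBridge α e s u β ∧ s < t ∧ t < u)
    (hno : ∀ s u β, IsBridge α e s u β → 0 < s) {D : Stage X} (hD : D.IsGood α e b)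
    {r : ℝ} (hr : 0 < r) :
    ∃ D' : Stage X, D'.IsGood α e b ∧ D.Extends (α 0) r D' := by
  have haLN : α 0 ∉ D.L ∪ D.N := fun h =>
    disjoint_left.1 hD.disj h (mem_image_of_mem α ⟨le_rfl, hD.pos⟩)
  set W : Set X := (D.V ∩ ball (α 0) r) \ (D.L ∪ D.N) with hWdef
  have hW : IsOpen W :=
    (hD.isOpen.inter isOpen_ball).sdiff (hD.left.isClosed.union hD.right.isClosed)
  have haW : α 0 ∈ W := ⟨⟨hD.mem, mem_ball_self hr⟩, haLN⟩
  have hWV : W ⊆ D.V := fun z hz => hz.1.1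
  have hWL : Disjoint D.L W := disjoint_left.2 fun z hz hzW => hzW.2 (Or.inl hz)
  have hWN : Disjoint D.N W := disjoint_left.2 fun z hz hzW => hzW.2 (Or.inr hz)
  obtain ⟨τ, hτ, hτW⟩ := hα.exists_hasBridge_of_forall_pos hbr hno hW haW
  have hsV : α D.s ∈ D.V := by
    obtain ⟨s, u, β, hβ, hs, hu, -, hV⟩ := hD.hasBridge D.s hD.pos le_rfl
    exact hV (mem_image_of_mem α ⟨hD.pos.le, hu.le⟩)
  have hfork : IsFork α e b D.p D.q D.L D.N D.V D.s D.L D.N :=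
    ⟨hD.pos.le, .of_isArc hD.left hsV, .of_isArc hD.right hsV, hD.L_inter_N, hD.disj, hD.seg⟩
  obtain ⟨s, L, N, hsτ, hs, hf⟩ := hfork.exists_lt_eps hα hD.hasBridge hτ
  have hs0 : 0 < s := by
    rcases hs with rfl | ⟨u, β, hβ⟩
    · exact hD.pos
    · exact hno _ _ _ hβ
  obtain ⟨-, u, -, -, -, hsu, -, hαW⟩ := hτW s hs0 hsτ
  have hsW : α s ∈ W := hαW (mem_image_of_mem α ⟨hs0.le, hsu.le⟩)
  obtain ⟨p', C, L', hC, hL', rfl, hCL, hL'V, hCW⟩ := hf.left.exists_first_entry hW hWL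
  obtain ⟨q', F, N', hF, hN', rfl, hFN, hN'V, hFW⟩ := hf.right.exists_first_entry hW hWN
  have hCs : α s ∉ C := fun h => disjoint_left.1 hCW h hsW
  have hFs : α s ∉ F := fun h => disjoint_left.1 hFW h hsW
  refine ⟨⟨D.P ∪ C, D.Q ∪ F, L', N', W, p', q', s⟩,
    ⟨hs0, hW, haW, hL', hN', fun t ht hts => hτW t ht (hts.trans_lt hsτ), ?_, ?_, ?_, ?_, ?_, ?_,
      ?_, ?_⟩,
    ⟨fun z hz => hz.1.2, hWV, hL'V, hN'V, ⟨C, hC, rfl, hCL⟩, ⟨F, hF, rfl, hFN⟩⟩⟩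
  · rintro z ⟨hz | hz, hz' | hz'⟩
    · exact hD.P_inter_Q ⟨hz, hz'⟩
    · exact (hFN hz').elim (fun h => hD.P_inter_N ⟨hz, h⟩) fun h => hD.P_inter_V ⟨hz, h⟩
    · exact (hCL hz).elim (fun h => hD.Q_inter_L ⟨hz', h⟩) fun h => hD.Q_inter_V ⟨hz', h⟩
    · exact (hf.inter ⟨Or.inl hz, Or.inl hz'⟩).resolve_left fun h => hCs (h ▸ hz)
  · rintro z ⟨hz | hz, hz'⟩
    · exact hD.P_inter_V ⟨hz, hN'V hz'⟩
    · exact (hf.inter ⟨Or.inl hz, Or.inr hz'⟩).resolve_left fun h => hCs (h ▸ hz)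
  · rintro z ⟨hz | hz, hz'⟩
    · exact hD.Q_inter_V ⟨hz, hL'V hz'⟩
    · exact (hf.inter ⟨Or.inr hz', Or.inl hz⟩).resolve_left fun h => hFs (h ▸ hz)
  · rintro z ⟨hz | hz, hz'⟩
    · exact hD.P_inter_V ⟨hz, hWV hz'⟩
    · exact absurd hz' (disjoint_left.1 hCW hz)
  · rintro z ⟨hz | hz, hz'⟩
    · exact hD.Q_inter_V ⟨hz, hWV hz'⟩
    · exact absurd hz' (disjoint_left.1 hFW hz)
  · exact (inter_subset_inter subset_union_right subset_union_right).trans hf.inter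
  · exact hf.disj.mono_left (union_subset_union subset_union_right subset_union_right)
  · obtain ⟨ε, hε, hεe, hεLN⟩ := hf.seg
    refine ⟨min ε (u - s), lt_min hε (by linarith), ?_, ?_⟩
    · show s + min ε (u - s) ≤ e
      linarith [min_le_left ε (u - s)]
    · rintro _ ⟨t, ht, rfl⟩
      have ht' : t ≤ s + min ε (u - s) := ht.2
      have hts : s ≤ t := ht.1
      have htW : α t ∈ W :=
        hαW (mem_image_of_mem α ⟨by linarith, by linarith [min_le_right ε (u - s)]⟩)
      rcases hεLN (mem_image_of_mem α ⟨hts, by linarith [min_le_left ε (u - s)]⟩) with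
        (h | h) | (h | h)
      · exact absurd htW (disjoint_left.1 hCW h)
      · exact Or.inl h
      · exact absurd htW (disjoint_left.1 hFW h)
      · exact Or.inr h

lemma Stage.IsGood.exists_isJordanCurve [CompactSpace X] [LocallyPathConnectedSpace X]
    (hα : IsArcParam α e)
    (hbr : ∀ t, 0 < t → t < e → ∃ s u β, IsBridge α e s u β ∧ s < t ∧ t < u)
    (hno : ∀ s u β, IsBridge α e s u β → 0 < s) {D : Stage X} (hD : D.IsGood α e b)
    (hp : D.p = b) (hq : D.q = b) (hab : α 0 ≠ b) :
    ∃ J, IsJordanCurve J ∧ α 0 ∈ J ∧ b ∈ J := by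
  choose next hnext using fun (k : ℕ) (D : {D : Stage X // D.IsGood α e b}) =>
    D.2.exists_extends hα hbr hno (r := 1 / ((k : ℝ) + 1)) (by positivity)
  let S : ℕ → {D : Stage X // D.IsGood α e b} :=
    fun k => Nat.rec ⟨D, hD⟩ (fun k D => ⟨next k D, (hnext k D).1⟩) k
  have hS : ∀ k, (S k).1.Extends (α 0) (1 / ((k : ℝ) + 1)) (S (k + 1)).1 :=
    fun k => (hnext k (S k)).2
  choose E hE hEP hEL using fun k => (hS k).left
  choose F hF hFQ hFN using fun k => (hS k).right
  have hanti : ∀ {n m : ℕ}, n ≤ m → (S m).1.V ⊆ (S n).1.V := by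
    intro n m h
    exact (antitone_nat_of_succ_le (f := fun k => (S k).1.V) fun k => (hS k).V_anti) h
  have hball : ∀ r > 0, ∃ M : ℕ, ∀ k ≥ M, (S k).1.V ⊆ ball (α 0) r := by
    intro r hr
    obtain ⟨n, hn⟩ := exists_nat_one_div_lt hr
    exact ⟨n + 1, fun k hk =>
      (hanti hk).trans ((hS n).V_subset.trans (ball_subset_ball hn.le))⟩
  have hjE : JoinedIn ((⋃ k, E k) ∪ {α 0}) b (α 0) := by
    rw [← hp]
    refine joinedIn_iUnion_of_shrinking (x := fun k => (S k).1.p) (fun k => (hE k).joinedIn) ?_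
    intro r hr
    obtain ⟨M, hM⟩ := hball r hr
    refine ⟨M + 1, fun k hk => ?_⟩
    obtain ⟨j, rfl⟩ : ∃ j, k = j + 1 := ⟨k - 1, by omega⟩
    exact (hEL _).trans (union_subset ((hS j).L_subset.trans (hM j (by omega)))
      (hM (j + 1) (by omega)))
  have hjF : JoinedIn ((⋃ k, F k) ∪ {α 0}) b (α 0) := by
    rw [← hq]
    refine joinedIn_iUnion_of_shrinking (x := fun k => (S k).1.q) (fun k => (hF k).joinedIn) ?_
    intro r hr
    obtain ⟨M, hM⟩ := hball r hr
    refine ⟨M + 1, fun k hk => ?_⟩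
    obtain ⟨j, rfl⟩ : ∃ j, k = j + 1 := ⟨k - 1, by omega⟩
    exact (hFN _).trans (union_subset ((hS j).N_subset.trans (hM j (by omega)))
      (hM (j + 1) (by omega)))
  have hPmono : Monotone fun k => (S k).1.P :=
    monotone_nat_of_le_succ fun k => by rw [hEP k]; exact subset_union_left
  have hQmono : Monotone fun k => (S k).1.Q :=
    monotone_nat_of_le_succ fun k => by rw [hFQ k]; exact subset_union_left
  have hEF : ∀ i j, E i ∩ F j ⊆ {b} := by
    intro i j z hz
    have h1 : z ∈ (S (i + 1)).1.P := by rw [hEP i]; exact Or.inr hz.1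
    have h2 : z ∈ (S (j + 1)).1.Q := by rw [hFQ j]; exact Or.inr hz.2
    exact (S (max (i + 1) (j + 1))).2.P_inter_Q
      ⟨hPmono (le_max_left _ _) h1, hQmono (le_max_right _ _) h2⟩
  obtain ⟨A, hAE, hA⟩ := hjE.exists_isArc
  obtain ⟨B, hBF, hB⟩ := hjF.exists_isArc
  refine ⟨A ∪ B, hA.isJordanCurve_union hB hab.symm ?_, Or.inl hA.right_mem, Or.inl hA.left_mem⟩
  rintro z ⟨hzA, hzB⟩
  rcases hAE hzA with h | h
  · rcases hBF hzB with h' | h'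
    · obtain ⟨i, hi⟩ := mem_iUnion.1 h
      obtain ⟨j, hj⟩ := mem_iUnion.1 h'
      exact Or.inl (hEF i j ⟨hi, hj⟩)
    · exact Or.inr h'
  · exact Or.inr h

/-- If the arc `α` joins two conjugate points and has a bridge that ends at its end point, then
some Jordan curve contains both end points. -/
theorem IsArcParam.exists_isJordanCurve_of_isBridge [CompactSpace X] [LocallyPathConnectedSpace X]
    (hα : IsArcParam α e) (hconj : IsConjugate (α 0) (α e)) {Q : Set X}
    (hQ : IsBridge α e s e Q) :
    ∃ J, IsJordanCurve J ∧ α 0 ∈ J ∧ α e ∈ J := by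
  have hne : ∀ {t}, 0 ≤ t → t < e → α t ≠ α e := fun ht hte h =>
    hte.ne (hα.inj ⟨ht, hte.le⟩ ⟨hα.pos.le, le_rfl⟩ h)
  have hbr : ∀ t, 0 < t → t < e →
      ∃ s u β, IsBridge α e s u β ∧ s < t ∧ t < u ∧ β ⊆ (univ : Set X) := by
    intro t ht hte
    refine hα.exists_isBridge le_rfl ht hte le_rfl ?_
    rw [← compl_eq_univ_sdiff]
    exact hconj _ (fun h => ht.ne' (hα.inj ⟨ht.le, hte.le⟩ ⟨le_rfl, hα.pos.le⟩ h)) (hne ht.le hte)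
  have hHB : ∀ t, 0 < t → t ≤ s → HasBridge α e univ t := by
    intro t ht hts
    obtain ⟨s', u, β, hβ, h1, h2, h3⟩ := hbr t ht (hts.trans_lt hQ.lt)
    exact ⟨s', u, β, hβ, h1, h2, h3, subset_univ _⟩
  have hseg : IsArc (α '' Icc s e) (α e) (α s) := (hα.isArc hQ.nonneg hQ.lt.le le_rfl).symm
  have hinter : α '' Icc s e ∩ Q ⊆ {α s, α e} := fun z hz =>
    hQ.inter ⟨hz.2, image_mono (Icc_subset_Icc_left hQ.nonneg) hz.1⟩
  have hdisj : Disjoint (α '' Icc s e ∪ Q) (α '' Ico 0 s) := by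
    rw [disjoint_left]
    rintro _ hz ⟨t, ht, rfl⟩
    have htI : t ∈ Icc 0 e := ⟨ht.1, (ht.2.trans hQ.lt).le⟩
    rcases hz with hz | hz
    · rw [hα.mem_image_iff (Icc_subset_Icc_left hQ.nonneg) htI] at hz
      exact absurd hz.1 (not_le.2 ht.2)
    · exact hQ.notMem hα htI ht.2.ne (ht.2.trans hQ.lt).ne hz
  have hlast : ∃ ε > 0, s + ε ≤ e ∧ α '' Icc s (s + ε) ⊆ α '' Icc s e ∪ Q :=
    ⟨e - s, by linarith [hQ.lt], by linarith, by
      rw [add_sub_cancel]; exact subset_union_left⟩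
  by_cases hno : ∀ s u β, IsBridge α e s u β → 0 < s
  · have hs0 := hno _ _ _ hQ
    refine Stage.IsGood.exists_isJordanCurve hα (fun t ht hte => ?_) hno
      (D := ⟨{α e}, {α e}, α '' Icc s e, Q, univ, α e, α e, s⟩)
      ⟨hs0, isOpen_univ, mem_univ _, hseg, hQ.isArc.symm, hHB, inter_subset_left,
        inter_subset_left, inter_subset_left, inter_subset_left, inter_subset_left, hinter, hdisj,
        hlast⟩ rfl rfl (hne le_rfl hα.pos)
    obtain ⟨s', u, β, hβ, h1, h2, -⟩ := hbr t ht hte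
    exact ⟨s', u, β, hβ, h1, h2⟩
  · push Not at hno
    obtain ⟨s₁, u, β, hβ, hs₁⟩ := hno
    obtain rfl : s₁ = 0 := le_antisymm hs₁ hβ.nonneg
    have hfork : IsFork α e (α e) (α e) (α e) (α '' Icc s e) Q univ s (α '' Icc s e) Q :=
      ⟨hQ.nonneg, .of_isArc hseg trivial, .of_isArc hQ.isArc.symm trivial, hinter, hdisj, hlast⟩
    obtain ⟨s', L, N, hs'u, hs', hf⟩ := hfork.exists_lt_eps hα hHB hβ.lt
    have hs'e : s' < e := hs'u.trans_le hβ.le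
    have hJ : IsJordanCurve (L ∪ N) :=
      hf.left.isArc.isJordanCurve_union hf.right.isArc (hne hf.nonneg hs'e).symm
        (by rw [pair_comm]; exact hf.inter)
    have hO : IsJordanCurve (β ∪ α '' Icc 0 u) :=
      hβ.isArc.isJordanCurve_union (hα.isArc le_rfl hβ.lt.le hβ.le)
        (fun h => hβ.lt.ne (hα.inj ⟨le_rfl, hα.pos.le⟩ ⟨hβ.lt.le, hβ.le⟩ h))
        fun z hz => hβ.inter ⟨hz.1, image_mono (Icc_subset_Icc_right hβ.le) hz.2⟩
    exact hconj.exists_of_inter hJ hO (Or.inl hβ.isArc.left_mem) (Or.inl hf.left.isArc.left_mem)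
      ⟨α s', Or.inl hf.left.isArc.right_mem, Or.inr (mem_image_of_mem α ⟨hf.nonneg, hs'u.le⟩)⟩

end Phases

section Cyclic

variable {X : Type} [MetricSpace X] [CompactSpace X] [LocallyPathConnectedSpace X] {a b : X}

lemma IsConjugate.exists_isJordanCurve_inter_arc (h : IsConjugate a b) (hab : a ≠ b) {A : Set X}
    (hA : IsArc A a b) : ∃ O, IsJordanCurve O ∧ a ∈ O ∧ ∃ c ∈ A ∩ O, c ≠ a := by
  obtain ⟨α, hc, hi, h0, h1, rfl⟩ := hA.exists_param hab one_pos
  have hα : IsArcParam α 1 := ⟨one_pos, hc, hi⟩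
  have hne : ∀ {r t : ℝ}, 0 ≤ r → r < t → t ≤ 1 → α r ≠ α t := fun hr hrt ht h =>
    hrt.ne (hi ⟨hr, hrt.le.trans ht⟩ ⟨hr.trans hrt.le, ht⟩ h)
  have hhalf : JoinedIn (univ \ {α (1 / 2)}) (α 0) (α 1) := by
    rw [← compl_eq_univ_sdiff, h0, h1]
    refine h _ ?_ ?_
    · rw [← h0]; exact (hne le_rfl (by norm_num) (by norm_num)).symm
    · rw [← h1]; exact hne (by norm_num) (by norm_num) le_rfl
  obtain ⟨s, u, β, hβ, -, hu, -⟩ :=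
    hα.exists_isBridge le_rfl (by norm_num) (by norm_num) le_rfl hhalf
  have hu0 : 0 < u := by linarith
  have hαu : IsArcParam α u :=
    ⟨hu0, hc.mono (Icc_subset_Icc_right hβ.le), hi.mono (Icc_subset_Icc_right hβ.le)⟩
  have hβu : IsBridge α u s u β :=
    ⟨hβ.nonneg, hβ.lt, le_rfl, hβ.isArc, fun z hz =>
      hβ.inter ⟨hz.1, image_mono (Icc_subset_Icc_right hβ.le) hz.2⟩⟩
  have hconj : IsConjugate (α 0) (α u) := by
    intro z hz0 hzu
    by_cases hz : z ∈ α '' Icc 0 u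
    · obtain ⟨r, hr, rfl⟩ := hz
      have hru : r < u := hr.2.lt_of_ne fun h => hzu (h ▸ rfl)
      have h2 : JoinedIn {α r}ᶜ (α u) (α 1) := by
        refine (hα.isArc hu0.le hβ.le le_rfl).joinedIn.mono ?_
        rintro _ ⟨t, ht, rfl⟩ htr
        exact hne hr.1 (hru.trans_le ht.1) ht.2 htr.symm
      have h3 := h (α r) (h0 ▸ hz0) (h1 ▸ hne hr.1 (hru.trans_le hβ.le) le_rfl)
      rw [← h0, ← h1] at h3
      exact h3.trans h2.symm
    · exact (hα.isArc le_rfl hu0.le hβ.le).joinedIn.mono fun x hx hxz => hz (hxz ▸ hx)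
  obtain ⟨J, hJ, hJ0, hJu⟩ := hαu.exists_isJordanCurve_of_isBridge hconj hβu
  exact ⟨J, hJ, h0 ▸ hJ0, α u, ⟨mem_image_of_mem α ⟨hu0.le, hβ.le⟩, hJu⟩,
    h0 ▸ (hne le_rfl hu0 hβ.le).symm⟩

/-- The cyclic connectivity theorem: two points of a Peano space that are not separated by any
point lie on a common Jordan curve. -/
theorem IsConjugate.exists_isJordanCurve [PathConnectedSpace X] (h : IsConjugate a b)
    (hab : a ≠ b) : ∃ J, IsJordanCurve J ∧ a ∈ J ∧ b ∈ J := by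
  obtain ⟨A, -, hA⟩ := (joinedIn_univ.2 (PathConnectedSpace.joined a b)).exists_isArc
  obtain ⟨O, hO, hbO, c, ⟨hcA, hcO⟩, hcb⟩ := h.symm.exists_isJordanCurve_inter_arc hab.symm hA.symm
  by_cases haO : a ∈ O
  · exact ⟨O, hO, haO, hbO⟩
  obtain ⟨w, A₁, A₂, h1, h2, h3, -, h5⟩ := hA.exists_first_hit hO.isClosed ⟨c, hcA, hcO⟩
  have hwO : w ∈ O := (h5.ge rfl).2
  have hwb : w ≠ b := by
    rintro rfl
    rw [h2.eq_singleton, union_eq_self_of_subset_right (singleton_subset_iff.2 h1.right_mem)] at h3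
    exact hcb (h5.le ⟨h3.ge hcA, hcO⟩)
  obtain ⟨P, Q, hP, hQ, rfl, hPQ⟩ := hO.exists_arcs hwO hbO hwb
  have hA₁ : ∀ z ∈ A₁, z ∈ P ∪ Q → z = w := fun z hz hz' => h5.le ⟨hz, hz'⟩
  have hAP : IsArc (A₁ ∪ P) a b := h1.trans hP fun z hz => hA₁ z hz.1 (Or.inl hz.2)
  obtain ⟨α, hc, hi, h0, h1', himg⟩ := hAP.exists_param hab one_pos
  obtain ⟨s, hs, hsw⟩ : w ∈ α '' Icc 0 1 := himg ▸ Or.inl h1.right_mem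
  have hs1 : s < 1 := hs.2.lt_of_ne fun hs1 => hwb (by rw [← hsw, hs1, h1'])
  have hbridge : IsBridge α 1 s 1 Q := by
    refine ⟨hs.1, hs1, le_rfl, by rwa [hsw, h1'], ?_⟩
    rw [himg, hsw, h1']
    rintro z ⟨hzQ, hz | hz⟩
    · exact Or.inl (hA₁ z hz (Or.inr hzQ))
    · exact hPQ.le ⟨hz, hzQ⟩
  have := IsArcParam.exists_isJordanCurve_of_isBridge ⟨one_pos, hc, hi⟩
    (by rwa [h0, h1']) hbridge
  rwa [h0, h1'] at this

end Cyclic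

section Maximal

variable {X : Type} [MetricSpace X] {J T B B' : Set X} {c d p q p' q' : X}

lemma IsJordanCurve.isConjugate (hJ : IsJordanCurve J) (hp : p ∈ J) (hq : q ∈ J) :
    IsConjugate p q := by
  intro z hzp hzq
  obtain ⟨P, -, hP, hzP⟩ := hJ.exists_isArc_avoiding hp hq hzp.symm hzq.symm
  exact hP.joinedIn.mono fun x hx hxz => hzP (hxz ▸ hx)

lemma IsConjugate.of_two (hpq : p ≠ q) (hcp : IsConjugate c p) (hcq : IsConjugate c q)
    (hpd : IsConjugate p d) (hqd : IsConjugate q d) : IsConjugate c d := by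
  intro z hzc hzd
  by_cases hzp : z = p
  · have hzq : z ≠ q := hzp ▸ hpq
    exact (hcq z hzc hzq).trans (hqd z hzq hzd)
  · exact (hcp z hzc hzp).trans (hpd z hzp hzd)

lemma IsConjugate.of_mem_of_disjoint (hB : IsPathConnected B) (hB' : IsPathConnected B')
    (hBB' : Disjoint B B') (hp : p ∈ B) (hp' : p' ∈ B) (hq : q ∈ B') (hq' : q' ∈ B')
    (hcp : IsConjugate c p) (hcq : IsConjugate c q) (hpq' : IsConjugate p' q') :
    IsConjugate c p' := by
  intro z hzc hzp'
  by_cases hz : z ∈ B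
  · have hzB' : z ∉ B' := disjoint_left.1 hBB' hz
    have h : JoinedIn {z}ᶜ q q' :=
      (hB'.joinedIn q hq q' hq').mono fun x hx hxz => hzB' (hxz ▸ hx)
    exact ((hcq z hzc fun h => hzB' (h ▸ hq)).trans h).trans
      (hpq'.symm z (fun h => hzB' (h ▸ hq')) hzp')
  · have h : JoinedIn {z}ᶜ p p' := (hB.joinedIn p hp p' hp').mono fun x hx hxz => hz (hxz ▸ hx)
    exact (hcp z hzc fun h => hz (h ▸ hp)).trans h

lemma CyclicallyConnected.isConjugate (hT : CyclicallyConnected T) (hp : p ∈ T) (hq : q ∈ T) :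
    IsConjugate p q := by
  obtain ⟨J, -, hJ, hpJ, hqJ⟩ := hT p hp q hq
  exact hJ.isConjugate hpJ hqJ

variable [CompactSpace X] [LocallyPathConnectedSpace X] [PathConnectedSpace X]

lemma cyclicallyConnected_setOf_isConjugate (hpq : p ≠ q) (h : IsConjugate p q) :
    CyclicallyConnected {c | IsConjugate c p ∧ IsConjugate c q} := by
  have key : ∀ c d, IsConjugate c p ∧ IsConjugate c q → IsConjugate d p ∧ IsConjugate d q → c ≠ d →
      ∃ J, J ⊆ {c | IsConjugate c p ∧ IsConjugate c q} ∧ IsJordanCurve J ∧ c ∈ J ∧ d ∈ J := by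
    intro c d hc hd hcd
    obtain ⟨J, hJ, hcJ, hdJ⟩ :=
      (IsConjugate.of_two hpq hc.1 hc.2 hd.1.symm hd.2.symm).exists_isJordanCurve hcd
    refine ⟨J, fun x hx => ?_, hJ, hcJ, hdJ⟩
    have hxc := hJ.isConjugate hx hcJ
    have hxd := hJ.isConjugate hx hdJ
    exact ⟨.of_two hcd hxc hxd hc.1 hd.1, .of_two hcd hxc hxd hc.2 hd.2⟩
  have hrefl : ∀ x : X, IsConjugate x x := fun x z hz _ => JoinedIn.refl hz.symm
  intro c hc d hd
  by_cases hcd : c = d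
  · subst hcd
    by_cases hcp : c = p
    · obtain ⟨J, h1, h2, h3, -⟩ := key c q hc ⟨h.symm, hrefl q⟩ (hcp ▸ hpq)
      exact ⟨J, h1, h2, h3, h3⟩
    · obtain ⟨J, h1, h2, h3, -⟩ := key c p hc ⟨hrefl p, h⟩ hcp
      exact ⟨J, h1, h2, h3, h3⟩
  · exact key c d hc hd hcd

lemma MaximalCyclic.eq_setOf_isConjugate (hT : MaximalCyclic T) (hp : p ∈ T) (hq : q ∈ T)
    (hpq : p ≠ q) : {c | IsConjugate c p ∧ IsConjugate c q} = T :=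
  hT.2.2 _ (cyclicallyConnected_setOf_isConjugate hpq (hT.2.1.isConjugate hp hq))
    fun _ hc => ⟨hT.2.1.isConjugate hc hp, hT.2.1.isConjugate hc hq⟩

lemma MaximalCyclic.subset_of_disjoint {T' : Set X} (hT : MaximalCyclic T)
    (hT' : MaximalCyclic T') (hB : IsPathConnected B) (hB' : IsPathConnected B')
    (hBB' : Disjoint B B') (hp : p ∈ T ∩ B) (hq : q ∈ T ∩ B') (hp' : p' ∈ T' ∩ B)
    (hq' : q' ∈ T' ∩ B') : T ⊆ T' := by
  intro c hc
  have hcp := hT.2.1.isConjugate hc hp.1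
  have hcq := hT.2.1.isConjugate hc hq.1
  have hpq' := hT'.2.1.isConjugate hp'.1 hq'.1
  rw [← hT'.eq_setOf_isConjugate hp'.1 hq'.1 (hBB'.ne_of_mem hp'.2 hq'.2)]
  exact ⟨.of_mem_of_disjoint hB hB' hBB' hp.2 hp'.2 hq.2 hq'.2 hcp hcq hpq',
    .of_mem_of_disjoint hB' hB hBB'.symm hq.2 hq'.2 hp.2 hp'.2 hcq hcp hpq'.symm⟩

end Maximal

/-- A Peano space contains at most countably many maximal cyclic subsets. -/
theorem countable_maximalCyclic
    (X : Type) [MetricSpace X] [CompactSpace X] [ConnectedSpace X] [LocallyConnectedSpace X] :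
    {T : Set X | MaximalCyclic T}.Countable := by
  have : LocallyPathConnectedSpace X := .of_compact_locallyConnected
  have : PathConnectedSpace X := .of_locallyPathConnectedSpace
  obtain ⟨𝓑, h𝓑, hcount, hbasis⟩ :=
    (TopologicalSpace.IsTopologicalBasis.isOpen_isPreconnected (α := X)).exists_countable
  have hpath : ∀ B ∈ 𝓑, ∀ x ∈ B, IsPathConnected B := fun B hB x hx =>
    (h𝓑 hB).1.isConnected_iff_isPathConnected.1 ⟨⟨x, hx⟩, (h𝓑 hB).2⟩
  let F : Set X × Set X → Set (Set X) := fun B =>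
    {T | MaximalCyclic T ∧ Disjoint B.1 B.2 ∧ (T ∩ B.1).Nonempty ∧ (T ∩ B.2).Nonempty}
  have hF : ∀ B ∈ 𝓑 ×ˢ 𝓑, (F B).Countable := by
    rintro ⟨B, B'⟩ ⟨hB, hB'⟩
    refine Set.Subsingleton.countable ?_
    rintro T ⟨hT, hBB', ⟨p, hp⟩, ⟨q, hq⟩⟩ T' ⟨hT', -, ⟨p', hp'⟩, ⟨q', hq'⟩⟩
    have h1 := hpath B hB p hp.2
    have h2 := hpath B' hB' q hq.2
    exact (hT.subset_of_disjoint hT' h1 h2 hBB' hp hq hp' hq').antisymm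
      (hT'.subset_of_disjoint hT h1 h2 hBB' hp' hq' hp hq)
  refine ((hcount.prod hcount).biUnion hF).mono fun T hT => ?_
  obtain ⟨p, hp, q, hq, hpq⟩ := not_subsingleton_iff.1 hT.1
  obtain ⟨U, V, hU, hV, hpU, hqV, hUV⟩ := t2_separation hpq
  obtain ⟨B, hB, hpB, hBU⟩ := hbasis.exists_subset_of_mem_open hpU hU
  obtain ⟨B', hB', hqB', hBV⟩ := hbasis.exists_subset_of_mem_open hqV hV
  exact mem_biUnion (x := (B, B')) ⟨hB, hB'⟩ ⟨hT, hUV.mono hBU hBV, ⟨p, hp, hpB⟩, ⟨q, hq, hqB'⟩⟩
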